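/- arXiv:2106.02766 — 4 statements merged into one kernel-verified Lean document; each statement's English description precedes it below -/
import Mathlib

section
/- Efficiency lower bound for two-wise independent functions (Corollary 1 of the paper, in measurement form): In the setting of the full measurement-adversary theorem for a two-wise independent f : 𝒳 × 𝒴 → 𝒵 with |𝒳| = |𝒴| — i.e., τ = (1/√(|𝒳||𝒴|)) ∑_{x,y} e_x ⊗ e_x ⊗ e_y ⊗ e_y ⊗ φ, contractions K_A : ℂ^𝒳 ⊗ ℂ^{S_N} → ℂ^{T_A}, K_B : ℂ^𝒴 ⊗ ℂ^{S_M} → ℂ^{T_B} with K_A†K_A ≤ I, K_B†K_B ≤ I, Ψ = (I ⊗ I ⊗ K_A ⊗ K_B)τ, p = ‖Ψ‖² > 0 (the non-abort probability), and W^{x,y}(t,t') = (1/p)∑_a Ψ(x,y,a,t)·conj(Ψ(x,y,a,t')) — suppose Bob, conditioned on non-abort, guesses the value f(X,Y) by a POVM: a family (G_z)_{z∈𝒵} of positive semidefinite matrices on ℂ^𝒴 ⊗ ℂ^{T_B} with ∑_z G_z = I, whose success probability P = ∑_{x,y} Tr(G_{f(x,y)} · (E_{yy} ⊗' W^{x,y}))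 satisfies P ≥ 1 − γ, where E_{yy} ⊗' W^{x,y} denotes the matrix on ℂ^𝒴 ⊗ ℂ^{T_B} supported on the y-block and equal to W^{x,y} there. If γ < 1 − 1/|𝒵|, then p ≤ (|𝒵|/|𝒳|) · (1 − γ − 1/|𝒵|)^{−2}; equivalently, log₂(1/p) ≥ log₂|𝒳| − log₂|𝒵| + 2·log₂(1 − γ − 1/|𝒵|). -/
open scoped BigOperators ComplexOrder
open Matrix Finset

/-- Löwner order: `A ≤ B` iff `B - A` is positive semidefinite. -/
def Loewner {n : Type*} [Fintype n] (A B : Matrix n n ℂ) : Prop := (B - A).PosSemidef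


section core
variable {m : Type*} [Fintype m]

/-- Real part of the trace as a real-linear functional. -/
noncomputable def auxTr (m : Type*) [Fintype m] : Matrix m m ℂ →ₗ[ℝ] ℝ :=
  Complex.reLm ∘ₗ (Matrix.traceLinearMap m ℝ ℂ)

lemma auxTr_apply (A : Matrix m m ℂ) : auxTr m A = A.trace.re := rfl

lemma auxTr_comm {k : Type*} [Fintype k] (A : Matrix m k ℂ) (B : Matrix k m ℂ) :
    auxTr m (A * B) = auxTr k (B * A) := by
  simp only [auxTr, LinearMap.comp_apply, Matrix.traceLinearMap_apply]
  rw [Matrix.trace_mul_comm]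

lemma auxTr_nonneg {A : Matrix m m ℂ} (hA : A.PosSemidef) : 0 ≤ auxTr m A :=
  (Complex.le_def.1 hA.trace_nonneg).1

variable [DecidableEq m]

open scoped MatrixOrder in
lemma aux_sqrt {A : Matrix m m ℂ} (hA : A.PosSemidef) :
    ∃ T : Matrix m m ℂ, T.PosSemidef ∧ T * T = A := by
  refine ⟨CFC.sqrt A, ?_, ?_⟩
  · exact Matrix.nonneg_iff_posSemidef.1 (CFC.sqrt_nonneg A)
  · exact CFC.sqrt_mul_sqrt_self A (Matrix.nonneg_iff_posSemidef.2 hA)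

lemma auxTr_mul_nonneg {A B : Matrix m m ℂ} (hA : A.PosSemidef) (hB : B.PosSemidef) :
    0 ≤ auxTr m (A * B) := by
  obtain ⟨S, hS, rfl⟩ := aux_sqrt hA
  rw [mul_assoc, auxTr_comm, mul_assoc]
  have := hB.mul_mul_conjTranspose_same S
  rw [hS.isHermitian.eq] at this
  rw [← mul_assoc]
  exact auxTr_nonneg this

lemma auxTr_quad_nonneg {A T : Matrix m m ℂ} (hA : A.IsHermitian) (hT : T.PosSemidef) :
    0 ≤ auxTr m (A * T * A * T) := by
  have := hT.conjTranspose_mul_mul_same A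
  rw [hA.eq] at this
  exact auxTr_mul_nonneg this hT

lemma aux_disc {a b c : ℝ} (h : ∀ t : ℝ, 0 ≤ a - 2 * t * b + t ^ 2 * c) : b ^ 2 ≤ a * c := by
  have := discrim_le_zero (a := c) (b := -2 * b) (c := a) (fun t => by nlinarith [h t])
  unfold discrim at this
  nlinarith

lemma aux_core_eps {X J : Type*} [Fintype X] [DecidableEq X] [Fintype J]
    (ω : X → Matrix m m ℂ) (ρ : Matrix m m ℂ) (M : J → Matrix m m ℂ) (h : X → J → ℝ) (c : ℝ)
    (hc : 0 ≤ c) (hρ : ρ.PosSemidef)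
    (hω : ∀ x, (ω x).PosSemidef) (hωρ : ∀ x, (ρ - ω x).PosSemidef)
    (hM : ∀ j, (M j).PosSemidef) (hM1 : ∀ j, (1 - M j).PosSemidef)
    (hh : ∀ x x', ∑ j, h x j * h x' j = if x = x' then c else 0) (ε : ℝ) (hε : 0 < ε) :
    (∑ j, ∑ x, h x j * auxTr m (M j * ω x)) ^ 2 ≤
      (∑ j, ∑ x, auxTr m (M j * ω x) + ε * ∑ j, auxTr m (M j)) * (c * auxTr m ρ) := by
  set σ : Matrix m m ℂ := ∑ x, ω x + ε • (1 : Matrix m m ℂ) with hσ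
  have hεpd : (ε • (1 : Matrix m m ℂ)).PosDef := Matrix.PosDef.one.smul hε
  have hσpd : σ.PosDef := (Matrix.PosDef.posSemidef_add (posSemidef_sum _ (fun x _ => hω x)) hεpd)
  obtain ⟨T, hT, hTT⟩ := aux_sqrt hσpd.posSemidef
  have hTu : IsUnit T := by
    have h1 : IsUnit (T * T) := hTT ▸ hσpd.isUnit
    exact isUnit_of_mul_isUnit_left h1
  have hdet : IsUnit T.det := (Matrix.isUnit_iff_isUnit_det T).1 hTu
  set I := T⁻¹ with hI
  have hTI : T * I = 1 := Matrix.mul_nonsing_inv T hdet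
  have hIT : I * T = 1 := Matrix.nonsing_inv_mul T hdet
  have hIps : I.PosSemidef := hT.inv
  set Q : J → Matrix m m ℂ := fun j => ∑ x, h x j • (I * ω x * I) with hQ
  have hU : ∀ x, (I * ω x * I).PosSemidef := fun x => by
    have := (hω x).mul_mul_conjTranspose_same I
    rwa [hIps.isHermitian.eq] at this
  have hQh : ∀ j, (Q j).IsHermitian := fun j => by
    unfold Matrix.IsHermitian
    simp only [hQ, conjTranspose_sum, conjTranspose_smul, star_trivial]
    exact Finset.sum_congr rfl fun x _ => by rw [(hU x).isHermitian.eq]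
  have hTQT : ∀ j, T * Q j * T = ∑ x, h x j • ω x := fun j => by
    simp only [hQ, Finset.mul_sum, Finset.sum_mul, Matrix.mul_smul, Matrix.smul_mul]
    refine Finset.sum_congr rfl fun x _ => ?_
    congr 1
    calc T * (I * ω x * I) * T = (T * I) * ω x * (I * T) := by simp only [mul_assoc]
      _ = ω x := by rw [hTI, hIT]; simp
  -- the three coefficients
  have hb : ∀ j, auxTr m (M j * T * Q j * T) = ∑ x, h x j * auxTr m (M j * ω x) := fun j => by
    have : M j * T * Q j * T = M j * (T * Q j * T) := by simp only [mul_assoc]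
    rw [this, hTQT, Finset.mul_sum, map_sum]
    simp only [Matrix.mul_smul, map_smul, smul_eq_mul]
  have ha : ∀ j, auxTr m (M j * T * M j * T) ≤
      ∑ x, auxTr m (M j * ω x) + ε * auxTr m (M j) := fun j => by
    have h1 : (T * M j * T).PosSemidef := by
      have := (hM j).mul_mul_conjTranspose_same T
      rwa [hT.isHermitian.eq] at this
    have h2 := auxTr_mul_nonneg h1 (hM1 j)
    rw [mul_sub, map_sub, mul_one] at h2
    have h3 : auxTr m (T * M j * T) = ∑ x, auxTr m (M j * ω x) + ε * auxTr m (M j) := by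
      rw [mul_assoc, auxTr_comm, mul_assoc, hTT, hσ, mul_add, map_add, Finset.mul_sum, map_sum,
        Matrix.mul_smul, map_smul, mul_one, smul_eq_mul]
    have h4 : auxTr m (T * M j * T * M j) = auxTr m (M j * T * M j * T) := by
      rw [auxTr_comm]; simp only [mul_assoc]
    linarith
  have hcc : ∑ j, auxTr m (Q j * T * Q j * T) ≤ c * auxTr m ρ := by
    have e1 : ∀ j, auxTr m (Q j * T * Q j * T) =
        ∑ x, ∑ x', (h x j * h x' j) * auxTr m (I * ω x * I * ω x') := fun j => by
      have : Q j * T * Q j * T = Q j * (T * Q j * T) := by simp only [mul_assoc]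
      rw [this, hTQT]
      simp only [hQ, Finset.sum_mul, Finset.mul_sum, map_sum, Matrix.mul_smul, Matrix.smul_mul,
        map_smul, smul_eq_mul, mul_assoc]
      rw [Finset.sum_comm]
      refine Finset.sum_congr rfl fun x _ => Finset.sum_congr rfl fun x' _ => ?_
      ring
    have e2 : ∑ j, auxTr m (Q j * T * Q j * T) = ∑ x, c * auxTr m (I * ω x * I * ω x) := by
      simp only [e1]
      rw [Finset.sum_comm]
      refine Finset.sum_congr rfl fun x _ => ?_
      rw [Finset.sum_comm]
      simp only [← Finset.sum_mul, hh]
      simp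
    rw [e2, ← Finset.mul_sum]
    refine mul_le_mul_of_nonneg_left ?_ hc
    have e3 : ∑ x, auxTr m (I * ω x * I * ω x) ≤ ∑ x, auxTr m (I * ω x * I * ρ) := by
      refine Finset.sum_le_sum fun x _ => ?_
      have := auxTr_mul_nonneg (hU x) (hωρ x)
      rw [mul_sub, map_sub] at this
      linarith
    refine e3.trans ?_
    have e4 : ∑ x, I * ω x * I * ρ + ε • (I * I * ρ) = ρ := by
      have : ∑ x, I * ω x * I * ρ + ε • (I * I * ρ) = I * σ * I * ρ := by
        simp only [hσ, mul_add, add_mul, Finset.mul_sum, Finset.sum_mul, Matrix.mul_smul,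
          Matrix.smul_mul, mul_one]
      rw [this, ← hTT]
      calc I * (T * T) * I * ρ = (I * T) * (T * I) * ρ := by simp only [mul_assoc]
        _ = ρ := by rw [hTI, hIT]; simp
    have e5 := congrArg (auxTr m) e4
    rw [map_add, map_sum, map_smul, smul_eq_mul] at e5
    have e6 : 0 ≤ auxTr m (I * I * ρ) := by
      refine auxTr_mul_nonneg ?_ hρ
      have := posSemidef_conjTranspose_mul_self I
      rwa [hIps.isHermitian.eq] at this
    nlinarith
  have key : (∑ j, ∑ x, h x j * auxTr m (M j * ω x)) ^ 2 ≤
      (∑ j, auxTr m (M j * T * M j * T)) * ∑ j, auxTr m (Q j * T * Q j * T) := by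
    apply aux_disc
    intro t
    have h0 : 0 ≤ ∑ j, auxTr m ((M j - t • Q j) * T * (M j - t • Q j) * T) :=
      Finset.sum_nonneg fun j _ => auxTr_quad_nonneg ((hM j).isHermitian.sub (by
        unfold Matrix.IsHermitian
        rw [conjTranspose_smul, star_trivial, (hQh j).eq])) hT
    have h1 : ∀ j, auxTr m ((M j - t • Q j) * T * (M j - t • Q j) * T) =
        auxTr m (M j * T * M j * T) - 2 * t * (∑ x, h x j * auxTr m (M j * ω x)) +
          t ^ 2 * auxTr m (Q j * T * Q j * T) := fun j => by
      have s : auxTr m (Q j * T * M j * T) = auxTr m (M j * T * Q j * T) := by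
        rw [mul_assoc (Q j * T), auxTr_comm]; simp only [mul_assoc]
      rw [← hb]
      simp only [sub_mul, mul_sub, Matrix.smul_mul, Matrix.mul_smul, map_sub, map_smul,
        smul_eq_mul, s]
      ring
    simp only [h1, Finset.sum_add_distrib, Finset.sum_sub_distrib, ← Finset.mul_sum] at h0
    exact h0
  refine key.trans ?_
  have hA := Finset.sum_le_sum fun j (_ : j ∈ Finset.univ) => ha j
  rw [Finset.sum_add_distrib, ← Finset.mul_sum] at hA
  refine mul_le_mul hA hcc (Finset.sum_nonneg fun j _ => auxTr_quad_nonneg (hQh j) hT) ?_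
  exact le_trans (Finset.sum_nonneg fun j _ => auxTr_quad_nonneg (hM j).isHermitian hT) hA

lemma aux_core {X J : Type*} [Fintype X] [DecidableEq X] [Fintype J]
    (ω : X → Matrix m m ℂ) (ρ : Matrix m m ℂ) (M : J → Matrix m m ℂ) (h : X → J → ℝ) (c : ℝ)
    (hc : 0 ≤ c) (hρ : ρ.PosSemidef)
    (hω : ∀ x, (ω x).PosSemidef) (hωρ : ∀ x, (ρ - ω x).PosSemidef)
    (hM : ∀ j, (M j).PosSemidef) (hM1 : ∀ j, (1 - M j).PosSemidef)
    (hh : ∀ x x', ∑ j, h x j * h x' j = if x = x' then c else 0) :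
    (∑ j, ∑ x, h x j * auxTr m (M j * ω x)) ^ 2 ≤
      (∑ j, ∑ x, auxTr m (M j * ω x)) * (c * auxTr m ρ) := by
  set K := (∑ j, auxTr m (M j)) * (c * auxTr m ρ) with hK
  have hK0 : 0 ≤ K := mul_nonneg (Finset.sum_nonneg fun j _ => auxTr_nonneg (hM j))
    (mul_nonneg hc (auxTr_nonneg hρ))
  refine le_of_forall_pos_le_add fun δ hδ => ?_
  have h1 := aux_core_eps ω ρ M h c hc hρ hω hωρ hM hM1 hh (δ / (K + 1)) (by positivity)
  rw [add_mul, mul_assoc (δ / (K + 1)), ← hK] at h1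
  have : δ / (K + 1) * K ≤ δ := by
    rw [div_mul_eq_mul_div, div_le_iff₀ (by positivity)]
    nlinarith
  linarith
end core

lemma auxTr_mul_conjTranspose {m k : Type*} [Fintype m] [Fintype k] (A : Matrix m k ℂ) :
    auxTr m (A * Aᴴ) = ∑ i, ∑ j, ‖A i j‖ ^ 2 := by
  rw [auxTr_apply]
  simp only [Matrix.trace, Matrix.diag, Matrix.mul_apply, Matrix.conjTranspose_apply,
    Complex.re_sum]
  refine Finset.sum_congr rfl fun i _ => Finset.sum_congr rfl fun j _ => ?_
  rw [Complex.star_def, Complex.mul_conj, Complex.normSq_eq_norm_sq, Complex.ofReal_re]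

lemma aux_block_trace {Y T : Type*} [Fintype Y] [DecidableEq Y] [Fintype T]
    (G : Matrix (Y × T) (Y × T) ℂ) (W : Matrix T T ℂ) (y : Y) :
    (G * Matrix.of (fun q r : Y × T =>
          if q.1 = y ∧ r.1 = y then W q.2 r.2 else 0)).trace =
      (G.submatrix (fun t => (y, t)) (fun t => (y, t)) * W).trace := by
  simp only [Matrix.trace, Matrix.diag, Matrix.mul_apply, Matrix.of_apply, Matrix.submatrix_apply,
    Fintype.sum_prod_type]
  rw [Finset.sum_eq_single y]
  · refine Finset.sum_congr rfl fun t _ => ?_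
    rw [Finset.sum_eq_single y]
    · simp
    · intro b _ hb
      simp [hb]
    · simp
  · intro b _ hb
    simp [hb]
  · simp

lemma aux_hh {X Y Z : Type*} [DecidableEq X] [Fintype Y] [Fintype Z] [DecidableEq Z] [Nonempty Z]
    (f : X → Y → Z)
    (hf : ∀ x₁ x₂ : X, x₁ ≠ x₂ →
      (univ.filter fun y => f x₁ y = f x₂ y).card * Fintype.card Z = Fintype.card Y)
    (x x' : X) :
    ∑ j : Y × Z, ((if f x j.1 = j.2 then (1 : ℝ) else 0) - (Fintype.card Z : ℝ)⁻¹) *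
        ((if f x' j.1 = j.2 then (1 : ℝ) else 0) - (Fintype.card Z : ℝ)⁻¹) =
      if x = x' then (Fintype.card Y : ℝ) * (1 - (Fintype.card Z : ℝ)⁻¹) else 0 := by
  have hk : (Fintype.card Z : ℝ) ≠ 0 := by exact_mod_cast Fintype.card_ne_zero
  have h1 : ∀ y, ∑ z, ((if f x y = z then (1 : ℝ) else 0) - (Fintype.card Z : ℝ)⁻¹) *
        ((if f x' y = z then (1 : ℝ) else 0) - (Fintype.card Z : ℝ)⁻¹) =
      (if f x y = f x' y then (1 : ℝ) else 0) - (Fintype.card Z : ℝ)⁻¹ := fun y => by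
    simp only [sub_mul, mul_sub, Finset.sum_sub_distrib, ← Finset.mul_sum, ← Finset.sum_mul,
      ite_mul, one_mul, zero_mul, Finset.sum_ite_eq, Finset.mem_univ, if_true, Finset.sum_const,
      Finset.card_univ, nsmul_eq_mul]
    rw [mul_inv_cancel₀ hk]
    simp only [eq_comm (a := f x' y)]
    ring
  rw [Fintype.sum_prod_type]
  simp only [h1]
  rw [Finset.sum_sub_distrib, Finset.sum_boole, Finset.sum_const, Finset.card_univ, nsmul_eq_mul]
  split_ifs with hx
  · subst hx
    simp
    ring
  · have := hf x x' hx
    have h2 : (((univ.filter fun y => f x y = f x' y).card : ℝ)) * (Fintype.card Z : ℝ) =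
        Fintype.card Y := by exact_mod_cast this
    rw [← h2]
    field_simp
    ring


/-- Efficiency lower bound for two-wise independent functions: in any zero-communication
entanglement-assisted protocol with abort for a two-wise independent `f : 𝒳 × 𝒴 → 𝒵` with
`|𝒳| = |𝒴|` and uniform inputs, if Bob's POVM guess conditioned on non-abort is correct with
probability at least `1 − γ` where `γ < 1 − 1/|𝒵|`, then the non-abort probability `p`
satisfies `p ≤ (|𝒵|/|𝒳|)·(1 − γ − 1/|𝒵|)⁻²`. -/
theorem efficiency_lower_bound_two_wise_independent
    {𝒳 𝒴 𝒵 S_N S_M T_A T_B : Type*}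
    [Fintype 𝒳] [DecidableEq 𝒳] [Nonempty 𝒳]
    [Fintype 𝒴] [DecidableEq 𝒴] [Nonempty 𝒴]
    [Fintype 𝒵] [DecidableEq 𝒵] [Nonempty 𝒵]
    [Fintype S_N] [DecidableEq S_N] [Fintype S_M] [DecidableEq S_M]
    [Fintype T_A] [Fintype T_B] [DecidableEq T_B]
    -- |𝒳| = |𝒴|
    (hcard : Fintype.card 𝒳 = Fintype.card 𝒴)
    (f : 𝒳 → 𝒴 → 𝒵)
    -- `f` is two-wise independent
    (hf : ∀ x₁ x₂ : 𝒳, x₁ ≠ x₂ →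
      (univ.filter fun y => f x₁ y = f x₂ y).card * Fintype.card 𝒵 = Fintype.card 𝒴)
    -- shared entanglement: a unit vector
    (φ : S_N × S_M → ℂ) (hφ : ∑ nm, ‖φ nm‖ ^ 2 = 1)
    -- the two local measurement (post-selection) operators, contractions
    (K_A : Matrix T_A (𝒳 × S_N) ℂ) (hK_A : Loewner (K_Aᴴ * K_A) 1)
    (K_B : Matrix T_B (𝒴 × S_M) ℂ) (hK_B : Loewner (K_Bᴴ * K_B) 1)
    -- `Ψ = (I ⊗ I ⊗ K_A ⊗ K_B) τ` where
    -- `τ = (1/√(|𝒳||𝒴|)) ∑_{x,y} e_x ⊗ e_x ⊗ e_y ⊗ e_y ⊗ φ`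
    (Ψ : 𝒳 → 𝒴 → T_A → T_B → ℂ)
    (hΨ : Ψ = fun x y a b =>
      (Real.sqrt ((Fintype.card 𝒳 : ℝ) * (Fintype.card 𝒴 : ℝ)) : ℂ)⁻¹ *
        ∑ n : S_N, ∑ m : S_M, K_A a (x, n) * K_B b (y, m) * φ (n, m))
    -- the non-abort probability
    (p : ℝ) (hp : p = ∑ x, ∑ y, ∑ a, ∑ b, ‖Ψ x y a b‖ ^ 2) (hppos : 0 < p)
    -- the blocks `W^{x,y}` of the post-selected state on registers `X, Y₁, T_B`
    (W : 𝒳 → 𝒴 → Matrix T_B T_B ℂ)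
    (hW : W = fun x y => fun t t' =>
      (p : ℂ)⁻¹ * ∑ a, Ψ x y a t * (starRingEnd ℂ) (Ψ x y a t'))
    -- Bob's guessing POVM on registers `Y, T_B`
    (G : 𝒵 → Matrix (𝒴 × T_B) (𝒴 × T_B) ℂ)
    (hGpsd : ∀ z, (G z).PosSemidef)
    (hGsum : ∑ z, G z = 1)
    -- success probability of the guess, conditioned on non-abort
    (γ P : ℝ)
    (hP : P = ∑ x, ∑ y,
      ((G (f x y) *
        Matrix.of (fun q r : 𝒴 × T_B =>
          if q.1 = y ∧ r.1 = y then W x y q.2 r.2 else 0)).trace).re)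
    (hPγ : 1 - γ ≤ P)
    (hγ : γ < 1 - (Fintype.card 𝒵 : ℝ)⁻¹) :
    p ≤ ((Fintype.card 𝒵 : ℝ) / (Fintype.card 𝒳 : ℝ)) *
      (1 - γ - (Fintype.card 𝒵 : ℝ)⁻¹)⁻¹ ^ 2 := by
  classical
  set n : ℝ := (Fintype.card 𝒴 : ℝ) with hn
  set k : ℝ := (Fintype.card 𝒵 : ℝ) with hk
  have hn0 : 0 < n := by rw [hn]; exact_mod_cast Fintype.card_pos
  have hk1 : 1 ≤ k := by rw [hk]; exact_mod_cast Fintype.card_pos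
  have hXn : (Fintype.card 𝒳 : ℝ) = n := by rw [hn, hcard]
  rw [hXn] at hΨ ⊢
  rw [Real.sqrt_mul_self hn0.le] at hΨ
  -- the building blocks
  let Kx : 𝒳 → Matrix T_A S_N ℂ := fun x => K_A.submatrix id (fun i => (x, i))
  let Φ : Matrix S_M S_N ℂ := Matrix.of fun i j => φ (j, i)
  let C : 𝒳 → Matrix S_M T_A ℂ := fun x => Φ * (Kx x)ᵀ
  let ω : 𝒳 → Matrix S_M S_M ℂ := fun x => C x * (C x)ᴴ
  let ρ : Matrix S_M S_M ℂ := Φ * Φᴴ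
  let L : 𝒴 → Matrix T_B S_M ℂ := fun y => K_B.submatrix id (fun i => (y, i))
  let Gb : 𝒴 → 𝒵 → Matrix T_B T_B ℂ :=
    fun y z => (G z).submatrix (fun t => (y, t)) (fun t => (y, t))
  let M : 𝒴 × 𝒵 → Matrix S_M S_M ℂ := fun j => (L j.1)ᴴ * Gb j.1 j.2 * L j.1
  let h : 𝒳 → 𝒴 × 𝒵 → ℝ := fun x j => (if f x j.1 = j.2 then (1 : ℝ) else 0) - k⁻¹
  have hω : ∀ x, (ω x).PosSemidef := fun x => posSemidef_self_mul_conjTranspose _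
  have hρ : ρ.PosSemidef := posSemidef_self_mul_conjTranspose _
  have hωρ : ∀ x, (ρ - ω x).PosSemidef := fun x => by
    have h1 : (1 - (Kx x)ᴴ * Kx x).PosSemidef := by
      have h2 := (show (1 - K_Aᴴ * K_A).PosSemidef from hK_A).submatrix (fun i : S_N => (x, i))
      have e : (1 - K_Aᴴ * K_A).submatrix (fun i : S_N => (x, i)) (fun i : S_N => (x, i)) =
          1 - (Kx x)ᴴ * Kx x := by
        ext i j
        simp [Kx, Matrix.mul_apply, Matrix.one_apply]
      rwa [e] at h2
    have h3 := h1.transpose.mul_mul_conjTranspose_same Φ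
    have e : Φ * (1 - (Kx x)ᴴ * Kx x)ᵀ * Φᴴ = ρ - ω x := by
      simp only [ρ, ω, C, transpose_sub, transpose_one, transpose_mul, conjTranspose_mul, mul_sub,
        sub_mul, Matrix.mul_sub, Matrix.sub_mul, Matrix.mul_one, Matrix.mul_assoc]
      rfl
    rwa [e] at h3
  have hGb : ∀ y z, (Gb y z).PosSemidef := fun y z => (hGpsd z).submatrix _
  have hGb1 : ∀ y z, (1 - Gb y z).PosSemidef := fun y z => by
    have h1 : (1 - G z).PosSemidef := by
      rw [← hGsum, ← Finset.add_sum_erase _ _ (Finset.mem_univ z), add_sub_cancel_left]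
      exact posSemidef_sum _ fun z' _ => hGpsd z'
    have h2 := h1.submatrix (fun t : T_B => (y, t))
    have e : (1 - G z).submatrix (fun t : T_B => (y, t)) (fun t : T_B => (y, t)) =
        1 - Gb y z := by
      ext i j
      simp [Gb, Matrix.one_apply]
    rwa [e] at h2
  have hGbsum : ∀ y, ∑ z, Gb y z = 1 := fun y => by
    ext i j
    have := congrFun (congrFun hGsum (y, i)) (y, j)
    simp only [Matrix.sum_apply, Matrix.one_apply] at this
    simp [Gb, Matrix.sum_apply, Matrix.one_apply, this]
  have hM : ∀ j, (M j).PosSemidef := fun j => (hGb j.1 j.2).conjTranspose_mul_mul_same _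
  have hM1 : ∀ j, (1 - M j).PosSemidef := fun j => by
    have h1 : (1 - (L j.1)ᴴ * L j.1).PosSemidef := by
      have h2 := (show (1 - K_Bᴴ * K_B).PosSemidef from hK_B).submatrix (fun i : S_M => (j.1, i))
      have e : (1 - K_Bᴴ * K_B).submatrix (fun i : S_M => (j.1, i)) (fun i : S_M => (j.1, i)) =
          1 - (L j.1)ᴴ * L j.1 := by
        ext i j
        simp [L, Matrix.mul_apply, Matrix.one_apply]
      rwa [e] at h2
    have h3 := (hGb1 j.1 j.2).conjTranspose_mul_mul_same (L j.1)
    have e : 1 - M j = (1 - (L j.1)ᴴ * L j.1) + (L j.1)ᴴ * (1 - Gb j.1 j.2) * L j.1 := by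
      simp only [M, Matrix.mul_sub, Matrix.sub_mul, Matrix.mul_one]
      abel
    rw [e]
    exact h1.add h3
  have hρ1 : auxTr S_M ρ = 1 := by
    rw [auxTr_mul_conjTranspose, ← hφ, Fintype.sum_prod_type, Finset.sum_comm]
    rfl
  have hinv : k⁻¹ ≤ 1 := inv_le_one_of_one_le₀ hk1
  have core := aux_core ω ρ M h (n * (1 - k⁻¹)) (mul_nonneg hn0.le (by linarith)) hρ hω hωρ hM hM1
    (aux_hh f hf)
  rw [hρ1, mul_one] at core
  -- relating to the protocol
  have hΨC : ∀ x y a b, Ψ x y a b = (n : ℂ)⁻¹ * (L y * C x) b a := fun x y a b => by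
    rw [hΨ]
    simp only [C, L, Kx, Φ, Matrix.mul_apply, Matrix.submatrix_apply, Matrix.transpose_apply,
      Matrix.of_apply, id, Finset.mul_sum]
    rw [Finset.sum_comm]
    refine Finset.sum_congr rfl fun i _ => Finset.sum_congr rfl fun j _ => ?_
    ring
  have hMtr : ∀ x y z, auxTr S_M (M (y, z) * ω x) =
      auxTr T_B (Gb y z * ((L y * C x) * (L y * C x)ᴴ)) := fun x y z => by
    simp only [M, ω, conjTranspose_mul]
    rw [Matrix.mul_assoc (L y)ᴴ, Matrix.mul_assoc (L y)ᴴ, auxTr_comm]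
    simp only [Matrix.mul_assoc]
  have hMsum : ∀ x y, ∑ z, auxTr S_M (M (y, z) * ω x) =
      ∑ b, ∑ a, ‖(L y * C x) b a‖ ^ 2 := fun x y => by
    simp only [hMtr]
    rw [← map_sum, ← Finset.sum_mul, hGbsum, Matrix.one_mul, auxTr_mul_conjTranspose]
  have hS : ∑ j, ∑ x, auxTr S_M (M j * ω x) = n ^ 2 * p := by
    rw [hp, Finset.sum_comm, Finset.mul_sum]
    refine Finset.sum_congr rfl fun x _ => ?_
    rw [Fintype.sum_prod_type, Finset.mul_sum]
    refine Finset.sum_congr rfl fun y _ => ?_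
    rw [hMsum, Finset.sum_comm, Finset.mul_sum]
    refine Finset.sum_congr rfl fun a _ => ?_
    rw [Finset.mul_sum]
    refine Finset.sum_congr rfl fun b _ => ?_
    rw [hΨC, norm_mul, norm_inv, Complex.norm_real, Real.norm_of_nonneg hn0.le]
    field_simp
  have hWm : ∀ x y, W x y = (p * n ^ 2)⁻¹ • ((L y * C x) * (L y * C x)ᴴ) := fun x y => by
    ext t t'
    rw [hW]
    simp only [hΨC, Matrix.smul_apply, Matrix.mul_apply (M := L y * C x), conjTranspose_apply,
      Finset.mul_sum, Finset.smul_sum, Complex.real_smul, map_mul, map_inv₀, Complex.conj_ofReal,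
      Complex.star_def]
    refine Finset.sum_congr rfl fun a _ => ?_
    push_cast
    rw [mul_inv, pow_two, mul_inv]
    ring
  have hPs : P = (p * n ^ 2)⁻¹ * ∑ x, ∑ y, auxTr S_M (M (y, f x y) * ω x) := by
    rw [hP, Finset.mul_sum]
    refine Finset.sum_congr rfl fun x _ => ?_
    rw [Finset.mul_sum]
    refine Finset.sum_congr rfl fun y _ => ?_
    rw [aux_block_trace, hWm, Matrix.mul_smul, hMtr, ← auxTr_apply, map_smul, smul_eq_mul]
  have hPs' : ∑ x, ∑ y, auxTr S_M (M (y, f x y) * ω x) = p * n ^ 2 * P := by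
    rw [hPs, mul_inv_cancel_left₀ (by positivity)]
  have hD : ∑ j, ∑ x, h x j * auxTr S_M (M j * ω x) = p * n ^ 2 * (P - k⁻¹) := by
    simp only [h, sub_mul, Finset.sum_sub_distrib, ← Finset.mul_sum, hS]
    rw [mul_sub, ← hPs', Finset.sum_comm]
    congr 1
    · refine Finset.sum_congr rfl fun x _ => ?_
      rw [Fintype.sum_prod_type]
      refine Finset.sum_congr rfl fun y _ => ?_
      simp
    · ring
  rw [hD, hS] at core
  set q := 1 - γ - k⁻¹ with hq
  have hq0 : 0 < q := by linarith
  have hqP : q ≤ P - k⁻¹ := by linarith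
  have h1 : (p * n ^ 2 * q) ^ 2 ≤ n ^ 2 * p * n := by
    have h2 : (p * n ^ 2 * q) ^ 2 ≤ (p * n ^ 2 * (P - k⁻¹)) ^ 2 := by gcongr
    have h3 : n ^ 2 * p * (n * (1 - k⁻¹)) ≤ n ^ 2 * p * n := by
      refine mul_le_mul_of_nonneg_left ?_ (by positivity)
      have : 0 ≤ k⁻¹ := by positivity
      nlinarith
    linarith
  have h2 : p * n * q ^ 2 ≤ 1 := by
    have h3 : (n ^ 3 * p) * (p * n * q ^ 2) ≤ (n ^ 3 * p) * 1 := by nlinarith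
    exact le_of_mul_le_mul_left h3 (by positivity)
  have h3 : p * n * q ^ 2 ≤ k := h2.trans hk1
  rw [inv_pow, div_mul_eq_mul_div, le_div_iff₀ hn0, ← div_eq_mul_inv, le_div_iff₀ (by positivity)]
  exact h3
end

section
/- Guessing-game bound (Lemma 1 of the paper, in POVM form): Let p be a prime, n an even positive integer, and g : (ZMod p)^{n/2} × (ZMod p)^{n/2} → (ZMod p)^n a function such that for every z ∈ (ZMod p)^n, the number of pairs (y,y') with y ≠ y' and g(y,y') = z is at most 2. Let ρ_{XM} = (ρ^x)_{x∈(ZMod p)^n} be a c-q state on ℂ^{(ZMod p)^n} ⊗ ℂ^{S_M}, and suppose there exists a state σ_M on ℂ^{S_M} with ρ^x ≤ 2^{-k'} · σ_M (Löwner order) for all x (i.e., H_min(X|M) ≥ k'). Let P_Y be a probability distribution on (ZMod p)^{n/2}, independent of (X,M), with P_Y(y) ≤ 2^{-k} for all y (i.e., H_min(Y) ≥ k). For each y let (F^y_{(y',b)})_{y' ≠ y, b ∈ ZMod p} be a POVM on ℂ^{S_M}: each F^y_{(y',b)} is positive semidefinite and ∑_{y'≠y, b} F^y_{(y',b)} =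 I. Then the success probability P_succ = ∑_{x} ∑_{y} P_Y(y) ∑_{y' ≠ y} Tr(F^y_{(y', ⟨x, g(y,y')⟩)} · ρ^x), where ⟨x,z⟩ = ∑_{i=1}^n x_i·z_i in ZMod p, satisfies P_succ ≤ 1/p + √(2 · p^{n+1} · 2^{−(k+k')}). -/
open scoped BigOperators ComplexOrder
open Matrix Finset

section helpers

/-- Orthogonality when a shift direction exists. -/
lemma gg_orth_aux {p n : ℕ} [Fact p.Prime] (z z' w : Fin n → ZMod p) (f h : ZMod p → ℂ)
    (hh : ∑ b, h b = 0) (h1 : ∑ i, w i * z i = 0) (h2 : ∑ i, w i * z' i ≠ 0) :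
    ∑ x : Fin n → ZMod p, f (∑ i, x i * z i) * h (∑ i, x i * z' i) = 0 := by
  set a := ∑ i, w i * z' i with ha
  have key : ∀ t : ZMod p, ∑ x : Fin n → ZMod p, f (∑ i, x i * z i) * h (∑ i, x i * z' i)
      = ∑ x : Fin n → ZMod p, f (∑ i, x i * z i) * h (∑ i, x i * z' i + t * a) := by
    intro t
    rw [← Equiv.sum_comp (Equiv.addRight (t • w))]
    refine Finset.sum_congr rfl fun x _ => ?_
    have e1 : ∑ i, (Equiv.addRight (t • w) x) i * z i = ∑ i, x i * z i := by
      simp [add_mul, Finset.sum_add_distrib, mul_assoc, ← Finset.mul_sum, h1]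
    have e2 : ∑ i, (Equiv.addRight (t • w) x) i * z' i = ∑ i, x i * z' i + t * a := by
      simp [add_mul, Finset.sum_add_distrib, mul_assoc, ← Finset.mul_sum, ha]
    rw [e1, e2]
  have tot : (p : ℂ) * ∑ x : Fin n → ZMod p, f (∑ i, x i * z i) * h (∑ i, x i * z' i) = 0 := by
    calc _ = ∑ t : ZMod p, ∑ x : Fin n → ZMod p, f (∑ i, x i * z i) * h (∑ i, x i * z' i) := by
          simp [ZMod.card]
      _ = ∑ t : ZMod p, ∑ x : Fin n → ZMod p,
            f (∑ i, x i * z i) * h (∑ i, x i * z' i + t * a) :=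
          Finset.sum_congr rfl fun t _ => key t
      _ = 0 := by
          rw [Finset.sum_comm]
          refine Finset.sum_eq_zero fun x _ => ?_
          rw [← Finset.mul_sum]
          have : ∑ t : ZMod p, h (∑ i, x i * z' i + t * a) = ∑ b, h b :=
            Equiv.sum_comp ((Equiv.mulRight₀ a h2).trans (Equiv.addLeft (∑ i, x i * z' i))) h
          rw [this, hh, mul_zero]
  have hp : (p : ℂ) ≠ 0 := by exact_mod_cast (Fact.out : p.Prime).ne_zero
  exact (mul_eq_zero.mp tot).resolve_left hp

lemma gg_orth {p n : ℕ} [Fact p.Prime] (z z' : Fin n → ZMod p) (f h : ZMod p → ℂ)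
    (hf : ∑ b, f b = 0) (hh : ∑ b, h b = 0) (hz : ¬ ∃ c : ZMod p, c ≠ 0 ∧ z' = c • z) :
    ∑ x : Fin n → ZMod p, f (∑ i, x i * z i) * h (∑ i, x i * z' i) = 0 := by
  by_cases hall : ∀ i j, z i * z' j = z j * z' i
  · by_cases hz0 : z = 0
    · have hz' : z' ≠ 0 := by
        rintro rfl
        exact hz ⟨1, one_ne_zero, by simp [hz0]⟩
      obtain ⟨i, hi⟩ := Function.ne_iff.mp hz'
      refine gg_orth_aux z z' (Pi.single i 1) f h hh ?_ ?_
      · simp [hz0]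
      · simpa [Pi.single_apply] using hi
    · obtain ⟨i, hi⟩ := Function.ne_iff.mp hz0
      simp only [Pi.zero_apply] at hi
      have e : z' = (z' i / z i) • z := by
        ext j
        have := hall i j
        simp only [Pi.smul_apply, smul_eq_mul]
        field_simp
        linear_combination this
      have hc : z' i / z i = 0 := by
        by_contra hne
        exact hz ⟨_, hne, e⟩
      have hz'0 : z' = 0 := by rw [e, hc, zero_smul]
      simp_rw [mul_comm (f _)]
      refine gg_orth_aux z' z (Pi.single i 1) h f hf ?_ ?_
      · simp [hz'0]
      · simpa [Pi.single_apply] using hi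
  · push Not at hall
    obtain ⟨i, j, hij⟩ := hall
    refine gg_orth_aux z z' (Pi.single j (z i) - Pi.single i (z j)) f h hh ?_ ?_
    · simp [sub_mul, Finset.sum_sub_distrib, Pi.single_apply, mul_comm (z i)]
    · simpa [sub_mul, Finset.sum_sub_distrib, Pi.single_apply, sub_eq_zero] using hij

lemma gg_scalar {p n : ℕ} [Fact p.Prime] {ι : Type*} (J : Finset ι) (z : ι → Fin n → ZMod p)
    (hz : ∀ u, (J.filter fun j => z j = u).card ≤ 2) (f : ι → ZMod p → ℂ)
    (hf : ∀ j ∈ J, ∑ b, f j b = 0) :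
    ∑ x : Fin n → ZMod p, ‖∑ j ∈ J, f j (∑ i, x i * z j i)‖ ^ 2
      ≤ 2 * (p : ℝ) ^ (n + 1) * ∑ j ∈ J, ∑ b, ‖f j b‖ ^ 2 := by
  classical
  let T : ι → ℝ := fun j => (p : ℝ) ^ n * ∑ b, ‖f j b‖ ^ 2
  have hT0 : ∀ j, 0 ≤ T j := fun j => by positivity
  let rel : ι → ι → Prop := fun j j' => ∃ c : ZMod p, c ≠ 0 ∧ z j' = c • z j
  have hsymm : ∀ j j', rel j j' ↔ rel j' j := by
    have : ∀ j j', rel j j' → rel j' j := by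
      rintro j j' ⟨c, hc, h⟩
      exact ⟨c⁻¹, inv_ne_zero hc, by rw [h, smul_smul, inv_mul_cancel₀ hc, one_smul]⟩
    exact fun j j' => ⟨this _ _, this _ _⟩
  have hS : ∀ j, ∑ x : Fin n → ZMod p, ‖f j (∑ i, x i * z j i)‖ ^ 2 ≤ T j := by
    intro j
    calc _ ≤ ∑ x : Fin n → ZMod p, ∑ b, ‖f j b‖ ^ 2 := Finset.sum_le_sum fun x _ =>
          Finset.single_le_sum (f := fun b => ‖f j b‖ ^ 2) (fun b _ => by positivity)
            (Finset.mem_univ _)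
      _ = T j := by simp [T, ZMod.card]
  have hK : ∀ j ∈ J, ∀ j' ∈ J, ∑ x : Fin n → ZMod p,
      (f j (∑ i, x i * z j i) * star (f j' (∑ i, x i * z j' i))).re
        ≤ if rel j j' then (T j + T j') / 2 else 0 := by
    intro j hj j' hj'
    split_ifs with hr
    · calc _ ≤ ∑ x : Fin n → ZMod p,
          (‖f j (∑ i, x i * z j i)‖ ^ 2 + ‖f j' (∑ i, x i * z j' i)‖ ^ 2) / 2 := by
            refine Finset.sum_le_sum fun x _ => ?_
            have h1 := Complex.re_le_norm
              (f j (∑ i, x i * z j i) * star (f j' (∑ i, x i * z j' i)))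
            rw [norm_mul, norm_star] at h1
            nlinarith [sq_nonneg (‖f j (∑ i, x i * z j i)‖ - ‖f j' (∑ i, x i * z j' i)‖)]
        _ ≤ _ := by
            rw [← Finset.sum_div, Finset.sum_add_distrib]
            have := hS j
            have := hS j'
            linarith
    · rw [← Complex.re_sum]
      have := gg_orth (z j) (z j') (f j) (fun b => star (f j' b)) (hf j hj)
        (by rw [← star_sum, hf j' hj', star_zero]) hr
      rw [this, Complex.zero_re]
  have hcount : ∀ j, ((J.filter fun j' => rel j j').card : ℝ) ≤ 2 * p := by
    intro j
    have h1 : (J.filter fun j' => rel j j') ⊆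
        (univ : Finset (ZMod p)).biUnion fun c => J.filter fun j' => z j' = c • z j := by
      intro j' hj'
      simp only [Finset.mem_filter] at hj'
      obtain ⟨hJ, c, hc, h⟩ := hj'
      simp only [Finset.mem_biUnion, Finset.mem_filter, Finset.mem_univ, true_and]
      exact ⟨c, hJ, h⟩
    have h2 := (Finset.card_le_card h1).trans
      (Finset.card_biUnion_le_card_mul _ _ 2 fun c _ => hz _)
    rw [Finset.card_univ, ZMod.card] at h2
    calc _ ≤ ((p * 2 : ℕ) : ℝ) := by exact_mod_cast h2
      _ = _ := by push_cast; ring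
  calc _ = ∑ x : Fin n → ZMod p, ∑ j ∈ J, ∑ j' ∈ J,
        (f j (∑ i, x i * z j i) * star (f j' (∑ i, x i * z j' i))).re := by
        refine Finset.sum_congr rfl fun x _ => ?_
        have h1 : ∀ a : ℂ, ‖a‖ ^ 2 = (a * star a).re := fun a => by
          rw [← Complex.normSq_eq_norm_sq, Complex.star_def, Complex.mul_conj, Complex.ofReal_re]
        rw [h1, star_sum, Finset.sum_mul_sum, Complex.re_sum]
        simp_rw [Complex.re_sum]
    _ = ∑ j ∈ J, ∑ j' ∈ J, ∑ x : Fin n → ZMod p,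
        (f j (∑ i, x i * z j i) * star (f j' (∑ i, x i * z j' i))).re := by
        rw [Finset.sum_comm]
        exact Finset.sum_congr rfl fun j _ => Finset.sum_comm
    _ ≤ ∑ j ∈ J, ∑ j' ∈ J, if rel j j' then (T j + T j') / 2 else 0 :=
        Finset.sum_le_sum fun j hj => Finset.sum_le_sum fun j' hj' => hK j hj j' hj'
    _ = ∑ j ∈ J, ∑ j' ∈ J, ((if rel j j' then T j / 2 else 0) +
          (if rel j j' then T j' / 2 else 0)) := by
        refine Finset.sum_congr rfl fun j _ => Finset.sum_congr rfl fun j' _ => ?_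
        split_ifs <;> ring
    _ = ∑ j ∈ J, ∑ j' ∈ J, (if rel j j' then T j else 0) := by
        simp_rw [Finset.sum_add_distrib]
        have : ∑ j ∈ J, ∑ j' ∈ J, (if rel j j' then T j' / 2 else 0) =
            ∑ j ∈ J, ∑ j' ∈ J, (if rel j j' then T j / 2 else 0) := by
          rw [Finset.sum_comm]
          simp_rw [hsymm]
        rw [this, ← Finset.sum_add_distrib]
        simp_rw [← Finset.sum_add_distrib]
        refine Finset.sum_congr rfl fun j _ => Finset.sum_congr rfl fun j' _ => ?_
        split_ifs <;> ring
    _ ≤ ∑ j ∈ J, 2 * p * T j := by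
        refine Finset.sum_le_sum fun j _ => ?_
        rw [← Finset.sum_filter, Finset.sum_const, nsmul_eq_mul]
        exact mul_le_mul_of_nonneg_right (hcount j) (hT0 j)
    _ = _ := by
        simp only [T]
        rw [Finset.mul_sum]
        exact Finset.sum_congr rfl fun j _ => by ring

lemma gg_center {p : ℕ} [Fact p.Prime] (f : ZMod p → ℂ) :
    (∑ b, (f b - (p : ℂ)⁻¹ * ∑ c, f c) = 0) ∧
    ∑ b, ‖f b - (p : ℂ)⁻¹ * ∑ c, f c‖ ^ 2 ≤ ∑ b, ‖f b‖ ^ 2 := by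
  have hp : (p : ℂ) ≠ 0 := by exact_mod_cast (Fact.out : p.Prime).ne_zero
  set m := (p : ℂ)⁻¹ * ∑ c, f c with hm
  have h0 : ∑ b, (f b - m) = 0 := by
    rw [Finset.sum_sub_distrib]
    simp [ZMod.card, hm, hp]
  refine ⟨h0, ?_⟩
  have h1 : ∀ b, ‖f b‖ ^ 2 = ‖f b - m‖ ^ 2 + ‖m‖ ^ 2 + 2 * ((f b - m) * star m).re := by
    intro b
    simp only [← Complex.normSq_eq_norm_sq, Complex.normSq_apply, Complex.mul_re, Complex.sub_re,
      Complex.sub_im, Complex.star_def, Complex.conj_re, Complex.conj_im]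
    ring
  simp_rw [h1]
  rw [Finset.sum_add_distrib, Finset.sum_add_distrib, ← Finset.mul_sum, ← Complex.re_sum,
    ← Finset.sum_mul, h0]
  simp
  positivity

variable {S : Type*} [Fintype S] [DecidableEq S]

lemma gg_hs (A : Matrix S S ℂ) : (Aᴴ * A).trace.re = ∑ s, ∑ t, ‖A s t‖ ^ 2 := by
  rw [Finset.sum_comm]
  simp only [Matrix.trace, Matrix.diag_apply, Matrix.mul_apply, Matrix.conjTranspose_apply,
    Complex.re_sum]
  refine Finset.sum_congr rfl fun s _ => Finset.sum_congr rfl fun t _ => ?_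
  rw [← Complex.normSq_eq_norm_sq, Complex.star_def, mul_comm, Complex.mul_conj,
    Complex.ofReal_re]

lemma gg_cs {X : Type*} [Fintype X] (C D : X → Matrix S S ℂ) :
    (∑ x, ((C x)ᴴ * D x).trace.re) ^ 2 ≤
      (∑ x, ((C x)ᴴ * C x).trace.re) * ∑ x, ((D x)ᴴ * D x).trace.re := by
  simp_rw [gg_hs]
  have e : ∀ A B : Matrix S S ℂ, (Aᴴ * B).trace.re = ∑ s, ∑ t, (star (A s t) * B s t).re := by
    intro A B
    rw [Finset.sum_comm]
    simp only [Matrix.trace, Matrix.diag_apply, Matrix.mul_apply, Matrix.conjTranspose_apply,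
      Complex.re_sum]
  simp_rw [e, ← Finset.sum_product', Finset.univ_product_univ]
  have h1 : |∑ q : X × S × S, (star (C q.1 q.2.1 q.2.2) * D q.1 q.2.1 q.2.2).re| ≤
      ∑ q : X × S × S, ‖C q.1 q.2.1 q.2.2‖ * ‖D q.1 q.2.1 q.2.2‖ := by
    refine (Finset.abs_sum_le_sum_abs _ _).trans (Finset.sum_le_sum fun q _ => ?_)
    refine (Complex.abs_re_le_norm _).trans ?_
    rw [norm_mul, norm_star]
  have h2 := Finset.sum_mul_sq_le_sq_mul_sq (univ : Finset (X × S × S))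
    (fun q => ‖C q.1 q.2.1 q.2.2‖) (fun q => ‖D q.1 q.2.1 q.2.2‖)
  have h3 := sq_le_sq' (by linarith [abs_nonneg (∑ q : X × S × S,
    (star (C q.1 q.2.1 q.2.2) * D q.1 q.2.1 q.2.2).re)]) h1
  rw [sq_abs] at h3
  simpa [Fintype.sum_prod_type] using h3.trans h2

lemma gg_conj_nonneg {E : Matrix S S ℂ} (hE : E.PosSemidef) (B : Matrix S S ℂ) :
    0 ≤ (Bᴴ * E * B).trace.re :=
  (Complex.nonneg_iff.mp (hE.conjTranspose_mul_mul_same B).trace_nonneg).1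

lemma gg_sq_le {E : Matrix S S ℂ} (hE : E.PosSemidef) (hE1 : (1 - E).PosSemidef) :
    (E - E * E).PosSemidef := by
  have h1 := hE1.conjTranspose_mul_mul_same E
  have h2 := hE.conjTranspose_mul_mul_same (1 - E)
  have h3 := h1.add h2
  rw [hE.1.eq, hE1.1.eq] at h3
  convert h3 using 1
  noncomm_ring

lemma gg_hs_le {E : Matrix S S ℂ} (hE : E.PosSemidef) (hE1 : (1 - E).PosSemidef)
    (B : Matrix S S ℂ) :
    ∑ s, ∑ t, ‖(B * E) s t‖ ^ 2 ≤ (Bᴴ * B * E).trace.re := by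
  rw [← gg_hs]
  have h := gg_conj_nonneg (gg_sq_le hE hE1) Bᴴ
  have e1 : ((B * E)ᴴ * (B * E)).trace = (B * (E * E) * Bᴴ).trace := by
    rw [Matrix.trace_mul_comm, conjTranspose_mul, hE.1.eq]
    simp only [Matrix.mul_assoc]
  have e2 : (Bᴴ * B * E).trace = (B * E * Bᴴ).trace := by
    rw [Matrix.mul_assoc, Matrix.trace_mul_comm]
  rw [conjTranspose_conjTranspose, Matrix.mul_sub, Matrix.sub_mul, Matrix.trace_sub,
    Complex.sub_re] at h
  rw [e1, e2]
  linarith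

end helpers

lemma gg_pairs {Y M : Type*} [Fintype Y] [DecidableEq Y] [AddCommMonoid M] (φ : Y × Y → M) :
    ∑ j ∈ univ.filter (fun j : Y × Y => j.1 ≠ j.2), φ j =
      ∑ y, ∑ y' ∈ univ.filter (fun y' => y' ≠ y), φ (y, y') := by
  rw [Finset.sum_filter, Fintype.sum_prod_type]
  refine Finset.sum_congr rfl fun y _ => ?_
  rw [Finset.sum_filter]
  refine Finset.sum_congr rfl fun y' _ => ?_
  simp only [ne_comm]

open scoped MatrixOrder in
lemma gg_factor {S : Type*} [Fintype S] [DecidableEq S] {A : Matrix S S ℂ} (hA : A.PosSemidef) :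
    ∃ B : Matrix S S ℂ, A = Bᴴ * B := by
  obtain ⟨B, hB⟩ := CStarAlgebra.nonneg_iff_eq_star_mul_self.mp hA.nonneg
  exact ⟨B, hB⟩

/-- Guessing-game bound: if Bob, holding quantum side information `M` about `X` with
`H_min(X|M) ≥ k'` and an independent source `Y` with `H_min(Y) ≥ k`, outputs `y' ≠ y` and a
guess `b` for `⟨x, g(y,y')⟩` via a POVM, then the success probability is at most
`1/p + √(2·p^{n+1}·2^{−(k+k')})`. -/
theorem guessing_game_bound
    (p : ℕ) [Fact p.Prime]
    (n : ℕ) (hn : Even n) (hnpos : 0 < n)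
    (g : ((Fin (n / 2) → ZMod p) × (Fin (n / 2) → ZMod p)) → (Fin n → ZMod p))
    -- `g` is at most 2-to-1 on pairs with distinct coordinates
    (hg : ∀ z : Fin n → ZMod p,
      (univ.filter fun yy' : (Fin (n / 2) → ZMod p) × (Fin (n / 2) → ZMod p) =>
        yy'.1 ≠ yy'.2 ∧ g yy' = z).card ≤ 2)
    {S_M : Type*} [Fintype S_M] [DecidableEq S_M]
    -- the c-q state `ρ_{XM}`
    (ρ : (Fin n → ZMod p) → Matrix S_M S_M ℂ)
    (hρ : ∀ x, (ρ x).PosSemidef)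
    (hρtr : ∑ x, (ρ x).trace = 1)
    -- conditional min-entropy: `ρ^x ≤ 2^{-k'}·σ_M` for some state `σ_M`
    (k' : ℝ) (σM : Matrix S_M S_M ℂ)
    (hσM : σM.PosSemidef) (hσMtr : σM.trace = 1)
    (hmin' : ∀ x, Loewner (ρ x) ((2 ^ (-k') : ℝ) • σM))
    -- the distribution of `Y`, independent of `(X,M)`, with min-entropy at least `k`
    (P_Y : (Fin (n / 2) → ZMod p) → ℝ)
    (hPY0 : ∀ y, 0 ≤ P_Y y) (hPY1 : ∑ y, P_Y y = 1)
    (k : ℝ) (hPYk : ∀ y, P_Y y ≤ 2 ^ (-k))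
    -- for each `y`, a POVM with outcomes `(y', b)`, `y' ≠ y`
    (F : (Fin (n / 2) → ZMod p) → (Fin (n / 2) → ZMod p) → ZMod p → Matrix S_M S_M ℂ)
    (hFpsd : ∀ y y' b, (F y y' b).PosSemidef)
    (hFsum : ∀ y, ∑ y' ∈ univ.filter (fun y' => y' ≠ y), ∑ b, F y y' b = 1)
    -- the success probability of the guessing game
    (Psucc : ℝ)
    (hPsucc : Psucc = ∑ x, ∑ y, P_Y y *
      ∑ y' ∈ univ.filter (fun y' => y' ≠ y),
        ((F y y' (∑ i, x i * g (y, y') i) * ρ x).trace).re) :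
    Psucc ≤ (p : ℝ)⁻¹ + Real.sqrt (2 * (p : ℝ) ^ (n + 1) * 2 ^ (-(k + k'))) := by
  classical
  have hp0 : (p : ℂ) ≠ 0 := by exact_mod_cast (Fact.out : p.Prime).ne_zero
  have hC : ∀ x, ∃ C : Matrix S_M S_M ℂ, ρ x = Cᴴ * C := fun x => gg_factor (hρ x)
  choose C hC using hC
  obtain ⟨B, hB⟩ : ∃ B : Matrix S_M S_M ℂ, σM = Bᴴ * B := gg_factor hσM
  set J := univ.filter
    (fun j : (Fin (n / 2) → ZMod p) × (Fin (n / 2) → ZMod p) => j.1 ≠ j.2) with hJ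
  let G : (Fin n → ZMod p) → Matrix S_M S_M ℂ := fun x => ∑ j ∈ J, (P_Y j.1 : ℂ) •
    (F j.1 j.2 (∑ i, x i * g j i) - (p : ℂ)⁻¹ • ∑ b, F j.1 j.2 b)
  -- the averaged part of the operator is the identity over `p`
  have havg : ∑ j ∈ J, (P_Y j.1 : ℂ) • ((p : ℂ)⁻¹ • ∑ b, F j.1 j.2 b)
      = (p : ℂ)⁻¹ • (1 : Matrix S_M S_M ℂ) := by
    rw [hJ, gg_pairs]
    calc _ = ∑ y, (P_Y y : ℂ) • ((p : ℂ)⁻¹ • (1 : Matrix S_M S_M ℂ)) := by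
          refine Finset.sum_congr rfl fun y _ => ?_
          simp only
          rw [← Finset.smul_sum, ← Finset.smul_sum, hFsum]
      _ = _ := by
          rw [← Finset.sum_smul, ← Complex.ofReal_sum, hPY1, Complex.ofReal_one, one_smul]
  have h1 : Psucc - (p : ℝ)⁻¹ = ∑ x, ((C x)ᴴ * (C x * G x)).trace.re := by
    have e : ∀ x, ((C x)ᴴ * (C x * G x)).trace.re =
        (∑ y, P_Y y * ∑ y' ∈ univ.filter (fun y' => y' ≠ y),
          ((F y y' (∑ i, x i * g (y, y') i) * ρ x).trace).re) - (p : ℝ)⁻¹ * (ρ x).trace.re := by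
      intro x
      rw [← Matrix.mul_assoc, ← hC, Matrix.trace_mul_comm]
      simp only [G]
      simp_rw [smul_sub]
      rw [Finset.sum_sub_distrib, havg, Matrix.sub_mul, Matrix.trace_sub, Complex.sub_re]
      congr 1
      · rw [hJ, gg_pairs, Finset.sum_mul, Matrix.trace_sum, Complex.re_sum]
        refine Finset.sum_congr rfl fun y _ => ?_
        rw [Finset.sum_mul, Matrix.trace_sum, Complex.re_sum, Finset.mul_sum]
        refine Finset.sum_congr rfl fun y' _ => ?_
        rw [Matrix.smul_mul, Matrix.trace_smul, smul_eq_mul, Complex.re_ofReal_mul]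
      · rw [Matrix.smul_mul, Matrix.one_mul, Matrix.trace_smul, smul_eq_mul]
        rw [← Complex.ofReal_natCast, ← Complex.ofReal_inv, Complex.re_ofReal_mul]
    simp_rw [e]
    rw [Finset.sum_sub_distrib, ← hPsucc, ← Finset.mul_sum, ← Complex.re_sum, hρtr,
      Complex.one_re, mul_one]
  have h2 := gg_cs C (fun x => C x * G x)
  rw [← h1] at h2
  have h3 : ∑ x, ((C x)ᴴ * C x).trace.re = 1 := by
    simp_rw [← hC]
    rw [← Complex.re_sum, hρtr, Complex.one_re]
  rw [h3, one_mul] at h2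
  have h4 : ∀ x, ((C x * G x)ᴴ * (C x * G x)).trace.re ≤
      2 ^ (-k') * ∑ s, ∑ t, ‖(B * G x) s t‖ ^ 2 := by
    intro x
    have h := gg_conj_nonneg (hmin' x) (G x)
    rw [← gg_hs]
    have e1 : ∀ A : Matrix S_M S_M ℂ, (A * G x)ᴴ * (A * G x) = (G x)ᴴ * (Aᴴ * A) * G x := by
      intro A
      rw [conjTranspose_mul]
      simp only [Matrix.mul_assoc]
    rw [e1, e1, ← hC, ← hB]
    rw [Matrix.mul_sub, Matrix.sub_mul, Matrix.trace_sub, Complex.sub_re, Matrix.mul_smul,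
      Matrix.smul_mul, Matrix.trace_smul, Complex.smul_re, smul_eq_mul] at h
    linarith
  -- the scalar bound, entry by entry
  have h5 : ∀ s t, ∑ x, ‖(B * G x) s t‖ ^ 2 ≤ 2 * (p : ℝ) ^ (n + 1) *
      ∑ j ∈ J, ∑ b, P_Y j.1 ^ 2 * ‖(B * F j.1 j.2 b) s t‖ ^ 2 := by
    intro s t
    have hs := gg_scalar J g (fun u => by
        rw [hJ, Finset.filter_filter]
        exact hg u)
      (fun j b => (P_Y j.1 : ℂ) *
        ((B * F j.1 j.2 b) s t - (p : ℂ)⁻¹ * ∑ c, (B * F j.1 j.2 c) s t))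
      (fun j _ => by
        rw [← Finset.mul_sum, (gg_center fun b => (B * F j.1 j.2 b) s t).1, mul_zero])
    refine le_trans (le_of_eq ?_) (hs.trans ?_)
    · refine Finset.sum_congr rfl fun x _ => ?_
      congr 2
      simp only [G]
      rw [Matrix.mul_sum, Matrix.sum_apply]
      refine Finset.sum_congr rfl fun j _ => ?_
      rw [Matrix.mul_smul, Matrix.smul_apply, smul_eq_mul, Matrix.mul_sub, Matrix.sub_apply,
        Matrix.mul_smul, Matrix.smul_apply, smul_eq_mul, Matrix.mul_sum, Matrix.sum_apply]
    · refine mul_le_mul_of_nonneg_left (Finset.sum_le_sum fun j _ => ?_) (by positivity)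
      simp_rw [norm_mul, mul_pow]
      rw [← Finset.mul_sum, ← Finset.mul_sum]
      have hn2 : ‖(P_Y j.1 : ℂ)‖ ^ 2 = P_Y j.1 ^ 2 := by
        rw [Complex.norm_real, Real.norm_eq_abs, sq_abs]
      rw [hn2]
      exact mul_le_mul_of_nonneg_left (gg_center fun b => (B * F j.1 j.2 b) s t).2
        (sq_nonneg _)
  have hF1 : ∀ y y' b, y' ≠ y → (1 - F y y' b).PosSemidef := by
    intro y y' b hy
    have e : 1 - F y y' b = ∑ q ∈ ((univ.filter (fun y' => y' ≠ y)) ×ˢ univ).erase (y', b),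
        F y q.1 q.2 := by
      rw [← hFsum y, ← Finset.sum_product', sub_eq_iff_eq_add,
        Finset.sum_erase_add _ _ (by simp [hy])]
    rw [e]
    exact Matrix.posSemidef_sum _ fun q _ => hFpsd _ _ _
  have h6 : ∑ s, ∑ t, ∑ x, ‖(B * G x) s t‖ ^ 2 ≤ 2 * (p : ℝ) ^ (n + 1) * 2 ^ (-k) := by
    calc _ ≤ ∑ s, ∑ t, 2 * (p : ℝ) ^ (n + 1) *
          ∑ j ∈ J, ∑ b, P_Y j.1 ^ 2 * ‖(B * F j.1 j.2 b) s t‖ ^ 2 :=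
          Finset.sum_le_sum fun s _ => Finset.sum_le_sum fun t _ => h5 s t
      _ = 2 * (p : ℝ) ^ (n + 1) * ∑ j ∈ J, ∑ b, P_Y j.1 ^ 2 *
          ∑ s, ∑ t, ‖(B * F j.1 j.2 b) s t‖ ^ 2 := by
          simp_rw [← Finset.mul_sum]
          congr 1
          rw [Finset.sum_congr rfl fun s _ => Finset.sum_comm, Finset.sum_comm]
          refine Finset.sum_congr rfl fun j _ => ?_
          simp_rw [← Finset.mul_sum]
          congr 1
          rw [Finset.sum_congr rfl fun s _ => Finset.sum_comm, Finset.sum_comm]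
      _ ≤ 2 * (p : ℝ) ^ (n + 1) * ∑ j ∈ J, ∑ b, P_Y j.1 ^ 2 *
          (σM * F j.1 j.2 b).trace.re := by
          refine mul_le_mul_of_nonneg_left (Finset.sum_le_sum fun j hj =>
            Finset.sum_le_sum fun b _ => mul_le_mul_of_nonneg_left ?_ (sq_nonneg _))
            (by positivity)
          rw [hB]
          refine gg_hs_le (hFpsd _ _ _) (hF1 _ _ _ ?_) B
          rw [hJ, Finset.mem_filter] at hj
          exact hj.2.symm
      _ = 2 * (p : ℝ) ^ (n + 1) * ∑ y, P_Y y ^ 2 := by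
          congr 1
          rw [hJ, gg_pairs]
          refine Finset.sum_congr rfl fun y _ => ?_
          simp_rw [← Finset.mul_sum, ← Complex.re_sum, ← Matrix.trace_sum, ← Matrix.mul_sum]
          rw [hFsum, Matrix.mul_one, hσMtr, Complex.one_re, mul_one]
      _ ≤ _ := by
          refine mul_le_mul_of_nonneg_left ?_ (by positivity)
          calc ∑ y, P_Y y ^ 2 ≤ ∑ y, 2 ^ (-k) * P_Y y := Finset.sum_le_sum fun y _ => by
                rw [sq]
                exact mul_le_mul_of_nonneg_right (hPYk y) (hPY0 y)
            _ = _ := by rw [← Finset.mul_sum, hPY1, mul_one]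
  have h7 : (Psucc - (p : ℝ)⁻¹) ^ 2 ≤ 2 * (p : ℝ) ^ (n + 1) * 2 ^ (-(k + k')) := by
    calc _ ≤ _ := h2
      _ ≤ ∑ x, (2 : ℝ) ^ (-k') * ∑ s, ∑ t, ‖(B * G x) s t‖ ^ 2 :=
          Finset.sum_le_sum fun x _ => h4 x
      _ = (2 : ℝ) ^ (-k') * ∑ s, ∑ t, ∑ x, ‖(B * G x) s t‖ ^ 2 := by
          rw [← Finset.mul_sum, Finset.sum_comm]
          congr 1
          exact Finset.sum_congr rfl fun s _ => Finset.sum_comm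
      _ ≤ (2 : ℝ) ^ (-k') * (2 * (p : ℝ) ^ (n + 1) * 2 ^ (-k)) :=
          mul_le_mul_of_nonneg_left h6 (by positivity)
      _ = _ := by
          rw [neg_add, Real.rpow_add two_pos]
          ring
  have := Real.le_sqrt_of_sq_le h7
  linarith
end

section
/- Local generation of a state with min-entropy via post-selection (Claim 1 of the paper): Let 𝒳 be a finite set and S_A, S_B finite types. Let φ = ∑_{x∈𝒳} e_x ⊗ e_x ⊗ v_x be a unit vector on ℂ^𝒳(register X) ⊗ ℂ^𝒳(register X') ⊗ ℂ^{S_A × S_B}, where v_x ∈ ℂ^{S_A × S_B} and ∑_x ‖v_x‖² = 1 (X is classical with copy X'). Suppose H_min(X|B)_φ ≥ k: there exists a state σ_B on ℂ^{S_B} such that for every x, the Gram matrix G^x_B defined by G^x_B(b,b') = ∑_{a∈S_A} v_x(a,b)·conj(v_x(a,b')) satisfies G^x_B ≤ 2^{−k}·σ_B in the Löwner order. Then there exist a finite type A₀, a unit vector s ∈ ℂ^{A₀ × S_B}, a complex number c with |c|² ≥ 2^k/|𝒳|, and a linear map K : ℂ^𝒳 ⊗ ℂ^{A₀} → ℂ^𝒳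 ⊗ ℂ^{S_A} with K†K ≤ I, such that (I_{𝒳} ⊗ K ⊗ I_{S_B}) applied to the vector (1/√|𝒳|) ∑_{x} e_x(register X₁) ⊗ e_x(register X₂) ⊗ s equals c · φ̃, where φ̃ = ∑_x e_x(X₁) ⊗ e_x(X') ⊗ v_x is φ with its first register relabeled X₁, I_𝒳 acts on X₁, K acts on (X₂, A₀), and I_{S_B} acts on the S_B index of s. (Interpretation: sharing a maximally entangled state on X₁X₂ with the Reference and a pure state s with Bob, Alice can perform a local measurement succeeding with probability |c|² ≥ 2^{k−log₂|𝒳|} whose success branch produces exactly the state φ.) -/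
open scoped BigOperators ComplexOrder
open Matrix Finset

/-- The conclusion of Claim 1, for a given ancilla type `A₀`: there exist a pure state `s` shared
with Bob, a measurement contraction `K` on Alice's side, and an amplitude `c` with
`|c|² ≥ 2^k/|𝒳|`, such that applying `I ⊗ K ⊗ I` to the maximally entangled state on `X₁X₂`
tensored with `s` yields `c` times the target state `φ̃ = ∑_x e_x ⊗ e_x ⊗ v_x`. -/
def Claim1Conclusion (𝒳 S_A S_B : Type*) [Fintype 𝒳] [DecidableEq 𝒳]
    [Fintype S_A] [DecidableEq S_A] [Fintype S_B] [DecidableEq S_B]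
    (v : 𝒳 → S_A × S_B → ℂ) (k : ℝ)
    (A₀ : Type) [iF : Fintype A₀] [iD : DecidableEq A₀] : Prop :=
  ∃ (s : A₀ × S_B → ℂ) (c : ℂ) (K : Matrix (𝒳 × S_A) (𝒳 × A₀) ℂ),
    (∑ q, ‖s q‖ ^ 2 = 1) ∧
    (2 ^ k / (Fintype.card 𝒳 : ℝ) ≤ ‖c‖ ^ 2) ∧
    Loewner (Kᴴ * K) 1 ∧
    ∀ (x₁ x' : 𝒳) (a : S_A) (b : S_B),
      (Real.sqrt (Fintype.card 𝒳) : ℂ)⁻¹ * ∑ a₀, K (x', a) (x₁, a₀) * s (a₀, b) =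
        c * (if x₁ = x' then v x₁ (a, b) else 0)

/-- Douglas factorization against a nonnegative diagonal matrix. -/
lemma douglas_diag {m n : Type*} [Fintype m] [Fintype n] [DecidableEq n]
    (W : Matrix m n ℂ) (d : n → ℝ) (hd : ∀ i, 0 ≤ d i)
    (h : (diagonal (fun i => (d i : ℂ)) - Wᴴ * W).PosSemidef) :
    ∃ L : Matrix m n ℂ, L * diagonal (fun i => (Real.sqrt (d i) : ℂ)) = W ∧
      (1 - Lᴴ * L).PosSemidef := by
  refine ⟨W * diagonal (fun i => ((Real.sqrt (d i))⁻¹ : ℂ)), ?_, ?_⟩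
  · ext a i
    rw [mul_diagonal, mul_diagonal]
    by_cases hi : d i = 0
    · have h1 := h.diag_nonneg (i := i)
      have h2 : (Wᴴ * W) i i = ((∑ a, ‖W a i‖ ^ 2 : ℝ) : ℂ) := by
        simp [mul_apply, Complex.conj_mul']
      rw [Matrix.sub_apply, h2, diagonal_apply_eq, hi, ← Complex.ofReal_sub] at h1
      have h3 : (0 : ℝ) ≤ 0 - ∑ a, ‖W a i‖ ^ 2 := by exact_mod_cast h1
      have h4 : ‖W a i‖ ^ 2 ≤ ∑ a, ‖W a i‖ ^ 2 :=
        Finset.single_le_sum (f := fun a => ‖W a i‖ ^ 2) (fun _ _ => by positivity)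
          (Finset.mem_univ a)
      have h5 : ‖W a i‖ = 0 := by nlinarith [norm_nonneg (W a i)]
      rw [norm_eq_zero] at h5
      simp [h5]
    · have : (Real.sqrt (d i) : ℂ) ≠ 0 := by
        have := Real.sqrt_pos.2 (lt_of_le_of_ne (hd i) (Ne.symm hi))
        exact_mod_cast this.ne'
      field_simp
  · set D : Matrix n n ℂ := diagonal (fun i => ((Real.sqrt (d i))⁻¹ : ℂ)) with hD
    have h1 := h.conjTranspose_mul_mul_same D
    have hDD : Dᴴ = D := by
      rw [hD, diagonal_conjTranspose]
      congr 1
      ext i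
      simp
    have h2 : (diagonal (fun i => ((1 - (Real.sqrt (d i))⁻¹ * d i * (Real.sqrt (d i))⁻¹ : ℝ) : ℂ))
        : Matrix n n ℂ).PosSemidef := by
      apply PosSemidef.diagonal
      intro i
      have : (0 : ℝ) ≤ 1 - (Real.sqrt (d i))⁻¹ * d i * (Real.sqrt (d i))⁻¹ := by
        by_cases hi : d i = 0
        · simp [hi]
        · have hp := Real.sqrt_pos.2 (lt_of_le_of_ne (hd i) (Ne.symm hi))
          have hs := Real.sq_sqrt (hd i)
          nth_rewrite 2 [← hs]
          field_simp
          simp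
      exact Complex.zero_le_real.2 this
    have h3 := h1.add h2
    convert h3 using 1
    rw [conjTranspose_mul, Matrix.mul_sub, Matrix.sub_mul]
    have : Dᴴ * diagonal (fun i => (d i : ℂ)) * D +
      diagonal (fun i => ((1 - (Real.sqrt (d i))⁻¹ * d i * (Real.sqrt (d i))⁻¹ : ℝ) : ℂ)) = 1 := by
      rw [hDD, hD, diagonal_mul_diagonal, diagonal_mul_diagonal, diagonal_add, ← diagonal_one]
      congr 1
      ext i
      push_cast
      ring
    rw [← this]
    simp only [Matrix.mul_assoc]
    abel

lemma posSemidef_blockDiag {o n : Type*} [Fintype o] [DecidableEq o] [Fintype n]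
    (B : o → Matrix n n ℂ) (hB : ∀ x, (B x).PosSemidef) : (blockDiagonal B).PosSemidef := by
  refine PosSemidef.of_dotProduct_mulVec_nonneg ?_ ?_
  · rw [IsHermitian, blockDiagonal_conjTranspose]
    congr 1
    ext1 x
    exact (hB x).1
  · intro y
    have : star y ⬝ᵥ blockDiagonal B *ᵥ y =
        ∑ x, star (fun i => y (i, x)) ⬝ᵥ B x *ᵥ (fun i => y (i, x)) := by
      simp [dotProduct, mulVec, Fintype.sum_prod_type, blockDiagonal_apply]
      rw [Finset.sum_comm]
    rw [this]
    exact Finset.sum_nonneg fun x _ => (hB x).dotProduct_mulVec_nonneg _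

lemma loewner_block {o m n : Type*} [Fintype o] [DecidableEq o] [Fintype n] [DecidableEq n]
    [Fintype m] (L : o → Matrix m n ℂ) (hL : ∀ x, (1 - (L x)ᴴ * L x).PosSemidef) :
    Loewner (((blockDiagonal L).submatrix (Equiv.prodComm o m) (Equiv.prodComm o n))ᴴ *
      (blockDiagonal L).submatrix (Equiv.prodComm o m) (Equiv.prodComm o n)) 1 := by
  unfold Loewner
  have := (posSemidef_blockDiag _ hL).submatrix (Equiv.prodComm o n)
  convert this using 1
  rw [conjTranspose_submatrix, submatrix_mul_equiv, blockDiagonal_conjTranspose,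
    ← blockDiagonal_mul, ← submatrix_one_equiv (Equiv.prodComm o n), ← blockDiagonal_one]
  have hs : (blockDiagonal fun x => 1 - (L x)ᴴ * L x) =
      blockDiagonal (1 : o → Matrix n n ℂ) - blockDiagonal fun x => (L x)ᴴ * L x :=
    blockDiagonal_sub _ _
  rw [hs]
  rfl

/-- Local generation of a state with conditional min-entropy via post-selection (Claim 1): if the
pure state `φ = ∑_x e_x ⊗ e_x ⊗ v_x` satisfies `H_min(X|B)_φ ≥ k`, then sharing a maximally
entangled state with the Reference and a suitable pure state with Bob, Alice can perform a local
measurement succeeding with probability at least `2^{k−log|𝒳|}` whose success branch produces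
exactly `φ`. -/
theorem local_generation_via_post_selection
    {𝒳 S_A S_B : Type*} [Fintype 𝒳] [DecidableEq 𝒳] [Nonempty 𝒳]
    [Fintype S_A] [DecidableEq S_A] [Fintype S_B] [DecidableEq S_B]
    (v : 𝒳 → S_A × S_B → ℂ)
    (hv : ∑ x, ∑ q, ‖v x q‖ ^ 2 = 1)
    -- the reduced blocks `G^x_B` of `φφᴴ` on registers `X, B`
    (G : 𝒳 → Matrix S_B S_B ℂ)
    (hG : G = fun x => fun b b' => ∑ a, v x (a, b) * (starRingEnd ℂ) (v x (a, b')))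
    -- `H_min(X|B)_φ ≥ k`: a state `σ_B` with `G^x ≤ 2^{-k}·σ_B` for all `x`
    (k : ℝ) (σB : Matrix S_B S_B ℂ)
    (hσB : σB.PosSemidef) (hσBtr : σB.trace = 1)
    (hmin : ∀ x, Loewner (G x) ((2 ^ (-k) : ℝ) • σB)) :
    ∃ (A₀ : Type) (iF : Fintype A₀) (iD : DecidableEq A₀),
      Claim1Conclusion 𝒳 S_A S_B v k A₀ (iF := iF) (iD := iD) := by
  set U : Matrix S_B S_B ℂ := (hσB.1.eigenvectorUnitary : Matrix S_B S_B ℂ) with hU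
  set d := hσB.1.eigenvalues with hd
  have hd0 : ∀ i, 0 ≤ d i := hσB.eigenvalues_nonneg
  have hUU : Uᴴ * U = 1 := Unitary.coe_star_mul_self hσB.1.eigenvectorUnitary
  have hUU' : U * Uᴴ = 1 := Unitary.coe_mul_star_self hσB.1.eigenvectorUnitary
  have hspec : σB = U * diagonal (fun i => (d i : ℂ)) * Uᴴ := by
    have := hσB.1.spectral_theorem
    rw [Unitary.conjStarAlgAut_apply] at this
    exact this
  have hspec' : Uᴴ * σB * U = diagonal (fun i => (d i : ℂ)) := by
    rw [hspec]
    calc Uᴴ * (U * diagonal (fun i => (d i : ℂ)) * Uᴴ) * U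
        = (Uᴴ * U) * diagonal (fun i => (d i : ℂ)) * (Uᴴ * U) := by
          simp only [Matrix.mul_assoc]
      _ = _ := by rw [hUU]; simp
  set r : ℝ := Real.sqrt (2 ^ k) with hr
  have hr2 : r * r = 2 ^ k := Real.mul_self_sqrt (by positivity)
  -- conjugated, scaled coefficient matrices
  let W : 𝒳 → Matrix S_A S_B ℂ := fun x => of fun a b => (r : ℂ) * star (v x (a, b))
  have hW : ∀ x, (W x)ᴴ * W x = ((2 ^ k : ℝ) : ℂ) • G x := by
    intro x
    ext b b'
    have hGb : G x b b' = ∑ a, v x (a, b) * (starRingEnd ℂ) (v x (a, b')) := by rw [hG]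
    simp only [W, hGb, mul_apply, conjTranspose_apply, of_apply, Matrix.smul_apply, smul_eq_mul,
      Finset.mul_sum, ← hr2]
    refine Finset.sum_congr rfl fun a _ => ?_
    simp
    ring
  have hWp : ∀ x, (σB - (W x)ᴴ * W x).PosSemidef := by
    intro x
    have h1 := (hmin x).smul (show (0 : ℝ) ≤ 2 ^ k by positivity)
    convert h1 using 1
    rw [hW, smul_sub, smul_smul, ← Real.rpow_add (by norm_num)]
    simp
  have hdoug : ∀ x, ∃ L : Matrix S_A S_B ℂ,
      L * diagonal (fun i => (Real.sqrt (d i) : ℂ)) = W x * U ∧ (1 - Lᴴ * L).PosSemidef := by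
    intro x
    apply douglas_diag _ d hd0
    have := (hWp x).conjTranspose_mul_mul_same U
    rw [Matrix.mul_sub, Matrix.sub_mul, hspec'] at this
    simpa only [conjTranspose_mul, Matrix.mul_assoc] using this
  choose L hL1 hL2 using hdoug
  have hL3 : ∀ x, L x * (diagonal (fun i => (Real.sqrt (d i) : ℂ)) * Uᴴ) = W x := by
    intro x
    rw [← Matrix.mul_assoc, hL1, Matrix.mul_assoc, hUU', Matrix.mul_one]
  set N : Matrix S_B S_B ℂ := diagonal (fun i => (Real.sqrt (d i) : ℂ)) * Uᴴ with hN
  have hNN : Nᴴ * N = σB := by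
    have hD : (diagonal (fun i => (Real.sqrt (d i) : ℂ)) : Matrix S_B S_B ℂ)ᴴ *
        diagonal (fun i => (Real.sqrt (d i) : ℂ)) = diagonal (fun i => (d i : ℂ)) := by
      rw [diagonal_conjTranspose, diagonal_mul_diagonal]
      congr 1
      ext i
      simp only [Pi.star_apply, RCLike.star_def, Complex.conj_ofReal]
      rw [← Complex.ofReal_mul, Real.mul_self_sqrt (hd0 i)]
    rw [hN, conjTranspose_mul, conjTranspose_conjTranspose, hspec, ← hD]
    simp only [Matrix.mul_assoc]
  let e : Fin (Fintype.card S_B) ≃ S_B := (Fintype.equivFin S_B).symm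
  let M : 𝒳 → Matrix S_A (Fin (Fintype.card S_B)) ℂ := fun x => ((L x)ᴴᵀ).submatrix id e
  have hM : ∀ x, (1 - (M x)ᴴ * M x).PosSemidef := by
    intro x
    have h1 := (hL2 x).transpose.submatrix e
    have heq : 1 - (M x)ᴴ * M x = (1 - (L x)ᴴ * L x)ᵀ.submatrix e e := by
      ext i j
      simp [M, mul_apply, one_apply, mul_comm, eq_comm]
    rw [heq]
    exact h1
  refine ⟨Fin (Fintype.card S_B), inferInstance, inferInstance,
    fun q => star (N (e q.1) q.2), ((r / Real.sqrt (Fintype.card 𝒳) : ℝ) : ℂ),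
    _, ?_, ?_, loewner_block M hM, ?_⟩
  · rw [← hNN] at hσBtr
    have h2 : (Nᴴ * N).trace = ((∑ b, ∑ i, ‖N i b‖ ^ 2 : ℝ) : ℂ) := by
      simp [trace, mul_apply, Complex.conj_mul']
    rw [h2] at hσBtr
    have h3 : ∑ b, ∑ i, ‖N i b‖ ^ 2 = (1 : ℝ) := by exact_mod_cast hσBtr
    rw [Fintype.sum_prod_type_right, ← h3]
    refine Finset.sum_congr rfl fun b _ => ?_
    simp only [norm_star]
    exact e.sum_comp (fun i => ‖N i b‖ ^ 2)
  · rw [Complex.norm_real, Real.norm_eq_abs, sq_abs, div_pow, sq r, hr2,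
      Real.sq_sqrt (by positivity)]
  · intro x₁ x' a b
    by_cases hx : x₁ = x'
    · subst hx
      have h1 : ∑ i, M x₁ a i * star (N (e i) b) = star (W x₁ a b) := by
        rw [← hL3 x₁, mul_apply, star_sum]
        rw [← e.sum_comp]
        refine Finset.sum_congr rfl fun i _ => ?_
        simp [M]
      simp only [submatrix_apply, Equiv.prodComm_apply, Prod.swap_prod_mk, blockDiagonal_apply_eq,
        if_true]
      rw [h1]
      simp [W]
      ring
    · simp [blockDiagonal_apply, hx, Ne.symm hx]
end

section
/- Two-sided local generation of a state via post-selection (Claim 2 of the paper): Let 𝒳, 𝒴 be finite sets and S_A, S_B finite types. Let φ = ∑_{x∈𝒳, y∈𝒴} e_x ⊗ e_x ⊗ e_y ⊗ e_y ⊗ v_{xy} be a unit vector on ℂ^𝒳(X) ⊗ ℂ^𝒳(X') ⊗ ℂ^𝒴(Y) ⊗ ℂ^𝒴(Y') ⊗ ℂ^{S_A × S_B}, with v_{xy} ∈ ℂ^{S_A × S_B} and ∑_{x,y} ‖v_{xy}‖² = 1. For x ∈ 𝒳 let G^x be the reduced density matrix of φ on registers (Y,Y',B) at the X-block x (the positive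 semidefinite matrix on ℂ^𝒴 ⊗ ℂ^𝒴 ⊗ ℂ^{S_B} supported on pairs (y,y) with (y,b),(y,b') entry ∑_{a} v_{xy}(a,b)·conj(v_{xy}(a,b'))), and for y ∈ 𝒴 let H^y be the reduced density matrix of φ on registers (X,X',A) at the Y-block y (entries ((x,x,a),(x̃,x̃,a')) equal to ∑_b v_{xy}(a,b)·conj(v_{x̃y}(a',b))). Assume: (i) there exists a state σ on ℂ^𝒴 ⊗ ℂ^𝒴 ⊗ ℂ^{S_B} with G^x ≤ 2^{−k₁}·σ for all x (H_min(X|BYY') ≥ k₁); and (ii) H^y ≤ 2^{−k₂}·(∑_{y'} H^{y'}) for all y (modified min-entropy H̃_min(Y|XX'A) ≥ k₂). Then there exist finite types A₀, B₀, a unit vector s ∈ ℂ^{A₀ × B₀}, a complex number c with |c|² ≥ 2^{k₁+k₂}/(|𝒳|·|𝒴|), and linear maps K_A : ℂ^𝒳 ⊗ ℂ^{A₀} → ℂ^𝒳 ⊗ ℂ^{S_A} and K_B : ℂ^𝒴 ⊗ ℂ^{B₀} → ℂ^𝒴 ⊗ ℂ^{S_B} with K_A†K_A ≤ I and K_B†K_B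 ≤ I, such that applying I_{X₁} ⊗ K_A ⊗ I_{Y₁} ⊗ K_B to the vector (1/√(|𝒳||𝒴|)) ∑_{x,y} e_x(X₁) ⊗ e_x(X₂) ⊗ e_y(Y₁) ⊗ e_y(Y₂) ⊗ s (with K_A acting on (X₂,A₀) and K_B on (Y₂,B₀)) yields c · φ̃, where φ̃ is φ with registers X, Y relabeled X₁, Y₁. -/
open scoped BigOperators ComplexOrder
open Matrix Finset

/-- The conclusion of Claim 2, for given ancilla types `A₀, B₀`: there exist a pure state `s`
split between Alice and Bob, local measurement contractions `K_A, K_B`, and an amplitude `c` with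
`|c|² ≥ 2^{k₁+k₂}/(|𝒳||𝒴|)`, such that applying `I ⊗ K_A ⊗ I ⊗ K_B` to the maximally entangled
states on `X₁X₂`, `Y₁Y₂` tensored with `s` yields `c` times the target state
`φ̃ = ∑_{x,y} e_x ⊗ e_x ⊗ e_y ⊗ e_y ⊗ v_{xy}`. -/
def Claim2Conclusion (𝒳 𝒴 S_A S_B : Type*) [Fintype 𝒳] [DecidableEq 𝒳]
    [Fintype 𝒴] [DecidableEq 𝒴]
    [Fintype S_A] [DecidableEq S_A] [Fintype S_B] [DecidableEq S_B]
    (v : 𝒳 → 𝒴 → S_A × S_B → ℂ) (k₁ k₂ : ℝ)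
    (A₀ B₀ : Type) [iFA : Fintype A₀] [iDA : DecidableEq A₀]
    [iFB : Fintype B₀] [iDB : DecidableEq B₀] : Prop :=
  ∃ (s : A₀ × B₀ → ℂ) (c : ℂ) (K_A : Matrix (𝒳 × S_A) (𝒳 × A₀) ℂ)
      (K_B : Matrix (𝒴 × S_B) (𝒴 × B₀) ℂ),
    (∑ q, ‖s q‖ ^ 2 = 1) ∧
    (2 ^ (k₁ + k₂) / ((Fintype.card 𝒳 : ℝ) * (Fintype.card 𝒴 : ℝ)) ≤ ‖c‖ ^ 2) ∧
    Loewner (K_Aᴴ * K_A) 1 ∧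
    Loewner (K_Bᴴ * K_B) 1 ∧
    ∀ (x₁ x' : 𝒳) (y₁ y' : 𝒴) (a : S_A) (b : S_B),
      (Real.sqrt ((Fintype.card 𝒳 : ℝ) * (Fintype.card 𝒴 : ℝ)) : ℂ)⁻¹ *
          ∑ a₀, ∑ b₀, K_A (x', a) (x₁, a₀) * K_B (y', b) (y₁, b₀) * s (a₀, b₀) =
        c * (if x₁ = x' ∧ y₁ = y' then v x₁ y₁ (a, b) else 0)

lemma exists_ginv {m n : Type*} [Fintype m] [Fintype n] [DecidableEq n] (K : Matrix m n ℂ) :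
    ∃ Z : Matrix m n ℂ, K * Kᴴ * Z = K := by
  have hle : LinearMap.range (K * Kᴴ).mulVecLin ≤ LinearMap.range K.mulVecLin := by
    rw [Matrix.mulVecLin_mul]
    exact LinearMap.range_comp_le_range _ _
  have heq : LinearMap.range (K * Kᴴ).mulVecLin = LinearMap.range K.mulVecLin := by
    apply Submodule.eq_of_le_of_finrank_eq hle
    exact Matrix.rank_self_mul_conjTranspose K
  have h : ∀ j, ∃ z : m → ℂ, (K * Kᴴ) *ᵥ z = K *ᵥ (Pi.single j 1) := by
    intro j
    have : K.mulVecLin (Pi.single j 1) ∈ LinearMap.range (K * Kᴴ).mulVecLin := by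
      rw [heq]; exact ⟨_, rfl⟩
    obtain ⟨z, hz⟩ := this
    exact ⟨z, hz⟩
  choose z hz using h
  refine ⟨Matrix.of fun i j => z j i, ?_⟩
  ext i j
  have := congrFun (hz j) i
  rw [Matrix.mulVec_single_one] at this
  exact this

lemma ginv_proj {m n : Type*} [Fintype m] [Fintype n] [DecidableEq n] {K Z : Matrix m n ℂ}
    (h : K * Kᴴ * Z = K) :
    (Kᴴ * Z)ᴴ = Kᴴ * Z ∧ (Kᴴ * Z) * (Kᴴ * Z) = Kᴴ * Z ∧ (1 - Kᴴ * Z).PosSemidef := by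
  have h0 : K * (Kᴴ * Z) = K := by rw [← Matrix.mul_assoc, h]
  have h1 : (Kᴴ * Z)ᴴ * (Kᴴ * Z) = (Kᴴ * Z)ᴴ := by
    rw [Matrix.conjTranspose_mul, Matrix.conjTranspose_conjTranspose, Matrix.mul_assoc, h0]
  have h2 : (Kᴴ * Z)ᴴ = Kᴴ * Z := by
    have := congrArg Matrix.conjTranspose h1
    rw [Matrix.conjTranspose_mul, Matrix.conjTranspose_conjTranspose] at this
    rw [← h1, this]
  have h3 : (Kᴴ * Z) * (Kᴴ * Z) = Kᴴ * Z := by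
    rw [h2] at h1; exact h1
  refine ⟨h2, h3, ?_⟩
  have : (1 - Kᴴ * Z) = (1 - Kᴴ * Z)ᴴ * (1 - Kᴴ * Z) := by
    rw [Matrix.conjTranspose_sub, h2, Matrix.conjTranspose_one, Matrix.mul_sub, Matrix.sub_mul,
      Matrix.sub_mul, h3]
    simp
  rw [this]
  exact Matrix.posSemidef_conjTranspose_mul_self _

lemma douglas {n m p : Type*} [Fintype n] [DecidableEq n] [Fintype m] [DecidableEq m] [Fintype p]
    [DecidableEq p] (A : Matrix n m ℂ) (B : Matrix n p ℂ) (t : ℝ) (ht : 0 ≤ t)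
    (h : (t • (B * Bᴴ) - A * Aᴴ).PosSemidef) :
    ∃ C : Matrix p m ℂ, A = B * C ∧ (t • (1 : Matrix p p ℂ) - C * Cᴴ).PosSemidef := by
  obtain ⟨Z, hZ⟩ := exists_ginv B
  obtain ⟨h1, h2, h3⟩ := ginv_proj hZ
  have h0 : B * (Bᴴ * Z) = B := by rw [← Matrix.mul_assoc, hZ]
  refine ⟨Zᴴ * A, ?_, ?_⟩
  · set W : Matrix n n ℂ := 1 - B * Zᴴ with hW
    have hWB : W * B = 0 := by
      have : Zᴴ * B = Bᴴ * Z := by rw [← h1]; simp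
      rw [hW, Matrix.sub_mul, Matrix.mul_assoc, this, h0]; simp
    have key := h.mul_mul_conjTranspose_same W
    have e : W * (t • (B * Bᴴ) - A * Aᴴ) * Wᴴ = -((W * A) * (W * A)ᴴ) := by
      rw [Matrix.mul_sub, Matrix.mul_smul, ← Matrix.mul_assoc W B, hWB]
      simp [Matrix.mul_assoc]
    rw [e] at key
    have pos := Matrix.posSemidef_self_mul_conjTranspose (W * A)
    have hz : (W * A) * (W * A)ᴴ = 0 := by
      have := key.trace_nonneg
      have t2 := pos.trace_nonneg
      rw [Matrix.trace_neg] at this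
      apply (Matrix.PosSemidef.trace_eq_zero_iff pos).1
      exact le_antisymm (by simpa using this) t2
    have hz' : W * A = 0 := Matrix.self_mul_conjTranspose_eq_zero.1 hz
    rw [hW, Matrix.sub_mul, sub_eq_zero, Matrix.one_mul] at hz'
    rw [← Matrix.mul_assoc]; exact hz'
  · have key := h.conjTranspose_mul_mul_same Z
    have e : t • (1 : Matrix p p ℂ) - Zᴴ * A * (Zᴴ * A)ᴴ =
        Zᴴ * (t • (B * Bᴴ) - A * Aᴴ) * Z + t • (1 - Bᴴ * Z) := by
      have : Zᴴ * (B * Bᴴ) * Z = Bᴴ * Z := by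
        calc _ = (Bᴴ * Z)ᴴ * (Bᴴ * Z) := by simp [Matrix.mul_assoc]
          _ = _ := by rw [h1, h2]
      rw [Matrix.mul_sub, Matrix.sub_mul, Matrix.mul_smul, Matrix.smul_mul, this, smul_sub]
      simp [Matrix.mul_assoc]
    rw [e]
    exact key.add (h3.smul ht)

open scoped MatrixOrder Matrix.Norms.L2Operator in
lemma psd_factor {n : Type*} [Fintype n] [DecidableEq n] {M : Matrix n n ℂ} (h : M.PosSemidef) :
    ∃ T : Matrix n n ℂ, M = Tᴴ * T := by
  obtain ⟨T, hT⟩ := (CStarAlgebra.nonneg_iff_eq_star_mul_self).1 h.nonneg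
  exact ⟨T, hT⟩

lemma block_mul {X S N : Type*} [Fintype X] [DecidableEq X] [Fintype S]
    [Fintype N] (C : X → Matrix N S ℂ) (t : ℝ) (ht : 0 < t)
    (K : Matrix (X × S) (X × N) ℂ)
    (hK : K = Matrix.of fun q r => if q.1 = r.1 then ((Real.sqrt t : ℂ))⁻¹ * C q.1 r.2 q.2 else 0)
    (q r : X × N) :
    (Kᴴ * K) q r = if q.1 = r.1 then ((t : ℂ))⁻¹ * (C q.1 * (C q.1)ᴴ) r.2 q.2 else 0 := by
  have hs : ((Real.sqrt t : ℂ))⁻¹ * ((Real.sqrt t : ℂ))⁻¹ = (t : ℂ)⁻¹ := by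
    rw [← mul_inv, ← Complex.ofReal_mul, Real.mul_self_sqrt ht.le]
  rw [Matrix.mul_apply, Fintype.sum_prod_type, Finset.sum_eq_single q.1]
  · by_cases h : q.1 = r.1
    · simp only [hK, Matrix.conjTranspose_apply, h, if_true, Matrix.mul_apply, Finset.mul_sum]
      refine Finset.sum_congr rfl fun s _ => ?_
      rw [← hs]
      simp [h]
      ring
    · simp [hK, h]
  · intro x _ hx
    simp [hK, hx]
  · simp

lemma block_contr {X S N : Type*} [Fintype X] [DecidableEq X] [Fintype S]
    [Fintype N] [DecidableEq N] (C : X → Matrix N S ℂ) (t : ℝ) (ht : 0 < t)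
    (h : ∀ x, (t • (1 : Matrix N N ℂ) - C x * (C x)ᴴ).PosSemidef)
    (K : Matrix (X × S) (X × N) ℂ)
    (hK : K = Matrix.of fun q r => if q.1 = r.1 then ((Real.sqrt t : ℂ))⁻¹ * C q.1 r.2 q.2 else 0) :
    Loewner (Kᴴ * K) 1 := by
  have h' : ∀ x, ∃ T : Matrix N N ℂ, t • (1 : Matrix N N ℂ) - C x * (C x)ᴴ = T * Tᴴ := by
    intro x
    obtain ⟨T, hT⟩ := psd_factor (h x)
    exact ⟨Tᴴ, by rw [hT]; simp⟩
  choose T hT using h'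
  have ht' : (t : ℂ) ≠ 0 := by exact_mod_cast ht.ne'
  have e : 1 - Kᴴ * K = (Matrix.of fun q r => if q.1 = r.1 then ((Real.sqrt t : ℂ))⁻¹ * T q.1 r.2 q.2 else 0 :
      Matrix (X × N) (X × N) ℂ)ᴴ *
      (Matrix.of fun q r => if q.1 = r.1 then ((Real.sqrt t : ℂ))⁻¹ * T q.1 r.2 q.2 else 0 :
      Matrix (X × N) (X × N) ℂ) := by
    ext q r
    rw [block_mul T t ht _ rfl, Matrix.sub_apply, block_mul C t ht K hK]
    by_cases hq : q.1 = r.1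
    · rw [if_pos hq, if_pos hq, ← hT, Matrix.sub_apply, mul_sub]
      congr 1
      obtain ⟨q1, q2⟩ := q
      obtain ⟨r1, r2⟩ := r
      simp only at hq
      subst hq
      by_cases h2 : q2 = r2
      · subst h2; simp [ht']
      · simp [h2, Ne.symm h2]
    · rw [if_neg hq, if_neg hq, Matrix.one_apply_ne (fun h => hq (by rw [h]))]
      simp
  unfold Loewner
  rw [e]
  exact Matrix.posSemidef_conjTranspose_mul_self _

lemma trace_conj_mul_self {m n : Type*} [Fintype m] [Fintype n] (R : Matrix m n ℂ) :
    (Rᴴ * R).trace = ((∑ j, ∑ i, ‖R i j‖ ^ 2 : ℝ) : ℂ) := by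
  simp only [Matrix.trace, Matrix.diag, Matrix.mul_apply, Matrix.conjTranspose_apply]
  push_cast
  refine Finset.sum_congr rfl fun j _ => Finset.sum_congr rfl fun i _ => ?_
  exact Complex.conj_mul' _

/-- Two-sided local generation of a state via post-selection (Claim 2): if the pure state
`φ = ∑_{x,y} e_x ⊗ e_x ⊗ e_y ⊗ e_y ⊗ v_{xy}` satisfies `H_min(X|BYY')_φ ≥ k₁` and the modified
min-entropy condition `H̃_min(Y|XX'A)_φ ≥ k₂`, then Alice and Bob, sharing maximally entangled
states with the Reference and a suitable pure state between themselves, can perform local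
measurements jointly succeeding with probability at least `2^{k₁+k₂}/(|𝒳||𝒴|)` whose success
branch produces exactly `φ`. -/
theorem two_sided_local_generation_via_post_selection
    {𝒳 𝒴 S_A S_B : Type*} [Fintype 𝒳] [DecidableEq 𝒳] [Nonempty 𝒳]
    [Fintype 𝒴] [DecidableEq 𝒴] [Nonempty 𝒴]
    [Fintype S_A] [DecidableEq S_A] [Fintype S_B] [DecidableEq S_B]
    (v : 𝒳 → 𝒴 → S_A × S_B → ℂ)
    (hv : ∑ x, ∑ y, ∑ q, ‖v x y q‖ ^ 2 = 1)
    -- the reduced blocks `G^x` of `φφᴴ` on registers `(Y,Y',B)` at the `X`-block `x`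
    (G : 𝒳 → Matrix (𝒴 × 𝒴 × S_B) (𝒴 × 𝒴 × S_B) ℂ)
    (hG : G = fun x => fun q r =>
      if q.1 = q.2.1 ∧ r.1 = r.2.1 then
        ∑ a, v x q.1 (a, q.2.2) * (starRingEnd ℂ) (v x r.1 (a, r.2.2))
      else 0)
    -- the reduced blocks `H^y` of `φφᴴ` on registers `(X,X',A)` at the `Y`-block `y`
    (H : 𝒴 → Matrix (𝒳 × 𝒳 × S_A) (𝒳 × 𝒳 × S_A) ℂ)
    (hH : H = fun y => fun q r =>
      if q.1 = q.2.1 ∧ r.1 = r.2.1 then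
        ∑ b, v q.1 y (q.2.2, b) * (starRingEnd ℂ) (v r.1 y (r.2.2, b))
      else 0)
    -- `H_min(X|BYY')_φ ≥ k₁`: a state `σ` with `G^x ≤ 2^{-k₁}·σ` for all `x`
    (k₁ : ℝ) (σ : Matrix (𝒴 × 𝒴 × S_B) (𝒴 × 𝒴 × S_B) ℂ)
    (hσ : σ.PosSemidef) (hσtr : σ.trace = 1)
    (hmin₁ : ∀ x, Loewner (G x) ((2 ^ (-k₁) : ℝ) • σ))
    -- `H̃_min(Y|XX'A)_φ ≥ k₂`: `H^y ≤ 2^{-k₂}·∑_{y'} H^{y'}` for all `y`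
    (k₂ : ℝ)
    (hmin₂ : ∀ y, Loewner (H y) ((2 ^ (-k₂) : ℝ) • ∑ y', H y')) :
    ∃ (A₀ B₀ : Type) (iFA : Fintype A₀) (iDA : DecidableEq A₀)
      (iFB : Fintype B₀) (iDB : DecidableEq B₀),
      Claim2Conclusion 𝒳 𝒴 S_A S_B v k₁ k₂ A₀ B₀
        (iFA := iFA) (iDA := iDA) (iFB := iFB) (iDB := iDB) := by
  classical
  set t₁ : ℝ := 2 ^ (-k₁) with ht₁
  set t₂ : ℝ := 2 ^ (-k₂) with ht₂
  have p₁ : 0 < t₁ := Real.rpow_pos_of_pos (by norm_num) _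
  have p₂ : 0 < t₂ := Real.rpow_pos_of_pos (by norm_num) _
  let eA := Fintype.equivFin (𝒴 × 𝒴 × S_B)
  let eB := Fintype.equivFin (𝒴 × S_B)
  -- factor σ
  obtain ⟨R0, hR0⟩ : ∃ R0 : Matrix (Fin (Fintype.card (𝒴 × 𝒴 × S_B))) (𝒴 × 𝒴 × S_B) ℂ,
      σ = R0ᴴ * R0 := by
    obtain ⟨T, hT⟩ := psd_factor hσ
    refine ⟨T.submatrix eA.symm id, ?_⟩
    rw [Matrix.conjTranspose_submatrix, Matrix.submatrix_mul_equiv, ← hT]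
    rfl
  -- operators for Alice
  have hC : ∀ x, ∃ C : Matrix (Fin (Fintype.card (𝒴 × 𝒴 × S_B))) S_A ℂ,
      (Matrix.of fun q a => if q.1 = q.2.1 then v x q.1 (a, q.2.2) else 0 :
        Matrix (𝒴 × 𝒴 × S_B) S_A ℂ) = R0ᴴ * C ∧
      (t₁ • (1 : Matrix (Fin (Fintype.card (𝒴 × 𝒴 × S_B))) _ ℂ) - C * Cᴴ).PosSemidef := by
    intro x
    apply douglas _ _ _ p₁.le
    rw [Matrix.conjTranspose_conjTranspose, ← hR0]
    have hg := hmin₁ x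
    unfold Loewner at hg
    convert hg using 2
    ext q r
    rw [hG]
    by_cases h1 : q.1 = q.2.1 <;> by_cases h2 : r.1 = r.2.1 <;>
      simp [Matrix.mul_apply, h1, h2]
  choose C hC1 hC2 using hC
  let R : Matrix (Fin (Fintype.card (𝒴 × 𝒴 × S_B))) (𝒴 × S_B) ℂ :=
    Matrix.of fun i d => star (R0 i (d.1, d.1, d.2))
  let V : Matrix (𝒳 × S_A) (𝒴 × S_B) ℂ := Matrix.of fun p d => v p.1 d.1 (p.2, d.2)
  let K : Matrix (𝒳 × S_A) (Fin (Fintype.card (𝒴 × 𝒴 × S_B))) ℂ :=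
    Matrix.of fun p i => C p.1 i p.2
  have hV : V = K * R := by
    ext ⟨x, a⟩ ⟨y, b⟩
    have := congrFun (congrFun (hC1 x) (y, y, b)) a
    simp only [Matrix.of_apply, if_true, Matrix.mul_apply, Matrix.conjTranspose_apply] at this
    simp only [V, K, R, Matrix.of_apply, Matrix.mul_apply, this]
    exact Finset.sum_congr rfl fun i _ => mul_comm _ _
  -- project
  obtain ⟨Z, hZ⟩ := exists_ginv K
  obtain ⟨z1, z2, z3⟩ := ginv_proj hZ
  have z0 : K * (Kᴴ * Z) = K := by rw [← Matrix.mul_assoc, hZ]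
  have hZK : Zᴴ * K = Kᴴ * Z := by rw [← z1]; simp
  let R' : Matrix (Fin (Fintype.card (𝒴 × 𝒴 × S_B))) (𝒴 × S_B) ℂ := Zᴴ * V
  have hR' : R' = (Kᴴ * Z) * R := by
    simp only [R']; rw [hV, ← Matrix.mul_assoc, hZK]
  have hKR' : K * R' = V := by
    rw [hR', ← Matrix.mul_assoc, z0, hV]
  -- operators for Bob
  have hN : ∀ y, ∃ N : Matrix (Fin (Fintype.card (𝒴 × S_B))) S_B ℂ,
      R'.submatrix id (fun b => (y, b)) = R'.submatrix id eB.symm * N ∧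
      (t₂ • (1 : Matrix (Fin (Fintype.card (𝒴 × S_B))) _ ℂ) - N * Nᴴ).PosSemidef := by
    intro y
    apply douglas _ _ _ p₂.le
    have h1 := ((hmin₂ y).submatrix (fun p : 𝒳 × S_A => (p.1, p.1, p.2))).conjTranspose_mul_mul_same Z
    have hH' : ∀ y q r, H y q r = if q.1 = q.2.1 ∧ r.1 = r.2.1 then
        ∑ b, v q.1 y (q.2.2, b) * (starRingEnd ℂ) (v r.1 y (r.2.2, b)) else 0 := by
      intro y q r; rw [hH]
    have e1 : ∀ y, (H y).submatrix (fun p : 𝒳 × S_A => (p.1, p.1, p.2)) (fun p => (p.1, p.1, p.2))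
        = V.submatrix id (fun b => (y, b)) * (V.submatrix id (fun b => (y, b)))ᴴ := by
      intro y
      ext p q
      simp [hH', V, Matrix.mul_apply]
    have e2 : (∑ y, H y).submatrix (fun p : 𝒳 × S_A => (p.1, p.1, p.2)) (fun p => (p.1, p.1, p.2))
        = V * Vᴴ := by
      ext p q
      simp [hH', V, Matrix.mul_apply, Matrix.sum_apply, Fintype.sum_prod_type]
    have e3 : R'.submatrix id (fun b => (y, b)) = Zᴴ * V.submatrix id (fun b => (y, b)) := by
      ext i b
      simp [R', Matrix.mul_apply]
    have e4 : R'.submatrix id eB.symm * (R'.submatrix id eB.symm)ᴴ = R' * R'ᴴ := by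
      rw [Matrix.conjTranspose_submatrix, Matrix.submatrix_mul_equiv]
      rfl
    have e5 : (t₂ • ∑ y', H y' - H y).submatrix (fun p : 𝒳 × S_A => (p.1, p.1, p.2))
        (fun p => (p.1, p.1, p.2)) = t₂ • (V * Vᴴ) -
        V.submatrix id (fun b => (y, b)) * (V.submatrix id (fun b => (y, b)))ᴴ := by
      rw [← e1, ← e2]; rfl
    rw [e5] at h1
    rw [e4, e3]
    convert h1 using 1
    simp only [R', Matrix.mul_sub, Matrix.sub_mul, Matrix.mul_smul, Matrix.smul_mul,
      Matrix.conjTranspose_mul, Matrix.conjTranspose_conjTranspose, Matrix.mul_assoc]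
  choose N hN1 hN2 using hN
  -- norm
  set r2 : ℝ := ∑ j, ∑ i, ‖R' i j‖ ^ 2 with hr2
  have r2pos : 0 < r2 := by
    have h0 : 0 ≤ r2 := by positivity
    rcases h0.lt_or_eq with h | h
    · exact h
    exfalso
    have hz : R' = 0 := by
      apply Matrix.trace_conjTranspose_mul_self_eq_zero_iff.1
      rw [trace_conj_mul_self, ← hr2, ← h]; simp
    have hV0 : V = 0 := by rw [← hKR', hz, Matrix.mul_zero]
    have : ∀ x y q, v x y q = 0 := fun x y q => congrFun (congrFun hV0 (x, q.1)) (y, q.2)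
    simp [this] at hv
  have r2le : r2 ≤ 1 := by
    have h1 : r2 ≤ ∑ j, ∑ i, ‖R i j‖ ^ 2 := by
      have := (z3.conjTranspose_mul_mul_same R).trace_nonneg
      have e : Rᴴ * (1 - Kᴴ * Z) * R = Rᴴ * R - R'ᴴ * R' := by
        rw [hR', Matrix.conjTranspose_mul, z1, Matrix.mul_sub, Matrix.sub_mul, Matrix.mul_one,
          Matrix.mul_assoc Rᴴ (Kᴴ * Z) (Kᴴ * Z * R), ← Matrix.mul_assoc (Kᴴ * Z) (Kᴴ * Z) R, z2,
          Matrix.mul_assoc Rᴴ (Kᴴ * Z) R]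
      rw [e, Matrix.trace_sub, trace_conj_mul_self, trace_conj_mul_self, ← hr2,
        ← Complex.ofReal_sub] at this
      have := Complex.zero_le_real.1 this
      linarith
    have h2 : ∑ j, ∑ i, ‖R0 i j‖ ^ 2 = 1 := by
      rw [hR0, trace_conj_mul_self] at hσtr
      exact_mod_cast hσtr
    refine h1.trans (le_of_le_of_eq ?_ h2)
    have h3 : ∑ j, ∑ i, ‖R i j‖ ^ 2 =
        ∑ j ∈ Finset.univ.image (fun d : 𝒴 × S_B => (d.1, d.1, d.2)), ∑ i, ‖R0 i j‖ ^ 2 := by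
      rw [Finset.sum_image]
      · simp [R]
      · rintro ⟨a, b⟩ _ ⟨c, d⟩ _ h
        simp at h
        simp [h.1, h.2]
    rw [h3]
    exact Finset.sum_le_sum_of_subset_of_nonneg (Finset.subset_univ _)
      (fun _ _ _ => by positivity)
  have rpos : 0 < Real.sqrt r2 := Real.sqrt_pos.2 r2pos
  set m : ℝ := (Fintype.card 𝒳 : ℝ) * (Fintype.card 𝒴 : ℝ) with hm
  have mpos : 0 < m := by
    have : 0 < Fintype.card 𝒳 := Fintype.card_pos
    have : 0 < Fintype.card 𝒴 := Fintype.card_pos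
    positivity
  refine ⟨Fin (Fintype.card (𝒴 × 𝒴 × S_B)), Fin (Fintype.card (𝒴 × S_B)), inferInstance,
    inferInstance, inferInstance, inferInstance,
    fun q => (Real.sqrt r2 : ℂ)⁻¹ * R' q.1 (eB.symm q.2),
    (Real.sqrt m : ℂ)⁻¹ * (Real.sqrt t₁ : ℂ)⁻¹ * (Real.sqrt t₂ : ℂ)⁻¹ * (Real.sqrt r2 : ℂ)⁻¹,
    Matrix.of fun q r => if q.1 = r.1 then ((Real.sqrt t₁ : ℂ))⁻¹ * C q.1 r.2 q.2 else 0,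
    Matrix.of fun q r => if q.1 = r.1 then ((Real.sqrt t₂ : ℂ))⁻¹ * N q.1 r.2 q.2 else 0,
    ?_, ?_, block_contr C t₁ p₁ hC2 _ rfl, block_contr N t₂ p₂ hN2 _ rfl, ?_⟩
  · have e : ∑ q : Fin (Fintype.card (𝒴 × 𝒴 × S_B)) × Fin (Fintype.card (𝒴 × S_B)),
        ‖R' q.1 (eB.symm q.2)‖ ^ 2 = r2 := by
      rw [Fintype.sum_prod_type_right, hr2]
      exact Equiv.sum_comp eB.symm (fun j => ∑ i, ‖R' i j‖ ^ 2)
    simp only [norm_mul, mul_pow, ← Finset.mul_sum, e]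
    rw [norm_inv, Complex.norm_real, Real.norm_of_nonneg rpos.le, inv_pow, Real.sq_sqrt r2pos.le]
    exact inv_mul_cancel₀ r2pos.ne'
  · simp only [norm_mul, norm_inv, Complex.norm_real, mul_pow, inv_pow, Real.norm_eq_abs, sq_abs]
    rw [Real.sq_sqrt r2pos.le, Real.sq_sqrt mpos.le, Real.sq_sqrt p₁.le, Real.sq_sqrt p₂.le,
      Real.rpow_add (by norm_num), ht₁, ht₂, Real.rpow_neg (by norm_num),
      Real.rpow_neg (by norm_num), inv_inv, inv_inv, div_eq_inv_mul, ← mul_assoc]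
    have : 1 ≤ r2⁻¹ := (one_le_inv₀ r2pos).2 r2le
    exact le_mul_of_one_le_right (by positivity) this
  · intro x₁ x' y₁ y' a b
    by_cases hx : x₁ = x'
    · by_cases hy : y₁ = y'
      · subst hx hy
        have key : v x₁ y₁ (a, b) = ∑ a₀, ∑ b₀, C x₁ a₀ a * (R' a₀ (eB.symm b₀) * N y₁ b₀ b) := by
          have h1 := congrFun (congrFun hKR' (x₁, a)) (y₁, b)
          simp only [V, K, Matrix.of_apply, Matrix.mul_apply] at h1
          rw [← h1]
          refine Finset.sum_congr rfl fun i _ => ?_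
          have h2 := congrFun (congrFun (hN1 y₁) i) b
          simp only [Matrix.submatrix_apply, Matrix.mul_apply, id] at h2
          rw [h2, Finset.mul_sum]
        simp only [and_self, if_true, key, Finset.mul_sum, Matrix.of_apply, ← hm]
        refine Finset.sum_congr rfl fun i _ => Finset.sum_congr rfl fun j _ => ?_
        ring
      · simp [hy, Ne.symm hy]
    · simp [hx, Ne.symm hx]
end
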